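/- Let G be a cyclically 4-edge-connected cubic simple graph containing no cycle of length 3 or 4, and let v1v2v3v4v5 be a 5-cycle in G with ui the third neighbor of vi outside the cycle for each i; assume u1, ..., u5 are pairwise distinct and none of them lies on the cycle. For each i ∈ {1, ..., 5} (indices modulo 5) let G_i be the graph obtained from G by deleting v1, ..., v5, adding a new vertex w adjacent to u_{i+2}, u_{i+3} and u_{i+4}, and adding the edge u_i u_{i+1}. Then ν(G) ≥ (5/2) · min_{1 ≤ i ≤ 5} ν(G_i). -/

import Mathlib

namespace CiDC

open SimpleGraph

/-- A circuit in a graph: a connected 2-regular subgraph. -/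
def IsCircuit {V : Type*} {G : SimpleGraph V} (H : G.Subgraph) : Prop :=
  H.Connected ∧ ∀ v ∈ H.verts, (H.neighborSet v).ncard = 2

open scoped Classical in
/-- A circuit double cover: a multiset of circuits covering every edge exactly twice
(counted with multiplicity). -/
def IsCiDC {V : Type*} (G : SimpleGraph V) (C : Multiset G.Subgraph) : Prop :=
  (∀ H ∈ C, IsCircuit H) ∧ ∀ e ∈ G.edgeSet, C.countP (fun H => e ∈ H.edgeSet) = 2

/-- ν(G): the number of circuit double covers of `G`. -/
noncomputable def nu {V : Type*} (G : SimpleGraph V) : ℕ :=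
  {C : Multiset G.Subgraph | IsCiDC G C}.ncard

/-- A cubic graph: every vertex has degree 3. -/
def IsCubic {V : Type*} (G : SimpleGraph V) : Prop :=
  ∀ v : V, (G.neighborSet v).ncard = 3



/-- The set of edges of `G` between `S` and its complement. -/
def edgeCutOf {V : Type*} (G : SimpleGraph V) (S : Set V) : Set (Sym2 V) :=
  {e | ∃ u v : V, e = s(u, v) ∧ G.Adj u v ∧ u ∈ S ∧ v ∉ S}

/-- An edge cut: a nonempty set of edges of the form `E(S, V \ S)`. -/
def IsEdgeCut {V : Type*} (G : SimpleGraph V) (F : Set (Sym2 V)) : Prop :=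
  F.Nonempty ∧ ∃ S : Set V, F = edgeCutOf G S

/-- A set of edges is circuit-separating if after its removal at least two of the
resulting components contain a circuit. -/
def CircuitSeparating {V : Type*} (G : SimpleGraph V) (F : Set (Sym2 V)) : Prop :=
  ∃ H₁ H₂ : (G.deleteEdges F).Subgraph,
    IsCircuit H₁ ∧ IsCircuit H₂ ∧
      ∃ x ∈ H₁.verts, ∃ y ∈ H₂.verts, ¬ (G.deleteEdges F).Reachable x y

/-- Cyclically 4-edge-connected: every circuit-separating edge cut has size at least 4. -/
def CyclicallyFourEdgeConnected {V : Type*} (G : SimpleGraph V) : Prop :=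
  ∀ F : Set (Sym2 V), IsEdgeCut G F → CircuitSeparating G F → 4 ≤ F.ncard

/-- 2-edge-connected: connected and bridgeless. -/
def TwoEdgeConnected {V : Type*} (G : SimpleGraph V) : Prop :=
  G.Connected ∧ ∀ e : Sym2 V, ¬ G.IsBridge e

/-- 3-edge-connected: connected, and still connected after deleting any ≤ 2 edges. -/
def ThreeEdgeConnected {V : Type*} (G : SimpleGraph V) : Prop :=
  G.Connected ∧ ∀ F : Set (Sym2 V), F.ncard ≤ 2 → (G.deleteEdges F).Connected


theorem three_mem {α : Type*} {S : Set α} (h : S.ncard = 3) {a b c : α} (ha : a ∈ S) (hb : b ∈ S)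
    (hc : c ∈ S) (hab : a ≠ b) (hac : a ≠ c) (hbc : b ≠ c) : S = {a, b, c} := by
  have hf : S.Finite := Set.finite_of_ncard_ne_zero (by omega)
  symm
  apply Set.eq_of_subset_of_ncard_le _ _ hf
  · intro x hx
    rcases hx with rfl | rfl | rfl <;> assumption
  · rw [h, Set.ncard_eq_three.2 ⟨a, b, c, hab, hac, hbc, rfl⟩]

theorem exists_two {α : Type*} {S : Set α} (h : S.ncard = 3) {a : α} (ha : a ∈ S) :
    ∃ b c, b ≠ c ∧ b ≠ a ∧ c ≠ a ∧ S = {a, b, c} := by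
  obtain ⟨x, y, z, hxy, hxz, hyz, rfl⟩ := Set.ncard_eq_three.1 h
  rcases ha with rfl | rfl | rfl
  · exact ⟨y, z, hyz, hxy.symm, hxz.symm, rfl⟩
  · exact ⟨x, z, hxz, hxy, hyz.symm, by ext; simp; tauto⟩
  · exact ⟨x, y, hxy, hxz, hyz, by ext; simp; tauto⟩

/-- `K` passes through the corner `p = (u, a)`: it contains `u` but not the edge `ua`. -/
def hasC {V : Type*} {H : SimpleGraph V} (K : H.Subgraph) (p : V × V) : Prop :=
  p.1 ∈ K.verts ∧ H.Adj p.1 p.2 ∧ ¬ K.Adj p.1 p.2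

/-- A valid transition system. -/
structure IsSys {V : Type*} (H : SimpleGraph V) (M : SimpleGraph (V × V)) : Prop where
  adj : ∀ p q, M.Adj p q →
    H.Adj p.1 q.1 ∧ H.Adj p.1 p.2 ∧ p.2 ≠ q.1 ∧ H.Adj q.1 q.2 ∧ q.2 ≠ p.1
  ex : ∀ u a w, H.Adj u a → H.Adj u w → a ≠ w → ∃ c, M.Adj (u, a) (w, c)
  valid : ∀ u a b, M.Reachable (u, a) (u, b) → a = b

theorem IsSys.uniq {V : Type*} {H : SimpleGraph V} {M : SimpleGraph (V × V)} (h : IsSys H M)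
    {p : V × V} {w c d : V} (h1 : M.Adj p (w, c)) (h2 : M.Adj p (w, d)) : c = d :=
  h.valid w c d (h1.reachable.symm.trans h2.reachable)

/-- The transition system of a family of circuits. -/
def sysOf {V : Type*} {H : SimpleGraph V} (C : Multiset H.Subgraph) : SimpleGraph (V × V) where
  Adj p q := H.Adj p.1 q.1 ∧ p.2 ≠ q.1 ∧ q.2 ≠ p.1 ∧ ∃ K ∈ C, hasC K p ∧ hasC K q
  symm := ⟨by
    rintro p q ⟨h1, h2, h3, K, hK, h4, h5⟩
    exact ⟨h1.symm, h3, h2, K, hK, h5, h4⟩⟩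
  loopless := ⟨fun p h => h.1.ne rfl⟩

section circ
variable {V : Type*} {H : SimpleGraph V}

theorem circ_corner (hc : IsCubic H) {K : H.Subgraph} (hK : IsCircuit K) {x : V}
    (hx : x ∈ K.verts) : ∃ a, H.neighborSet x \ K.neighborSet x = {a} := by
  rw [← Set.ncard_eq_one]
  have hf : (K.neighborSet x).Finite := Set.finite_of_ncard_ne_zero (by rw [hK.2 x hx]; omega)
  rw [Set.ncard_sdiff (K.neighborSet_subset x) hf, hc x, hK.2 x hx]

theorem hasC_ex (hc : IsCubic H) {K : H.Subgraph} (hK : IsCircuit K) {x : V}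
    (hx : x ∈ K.verts) : ∃ a, hasC K (x, a) := by
  obtain ⟨a, ha⟩ := circ_corner hc hK hx
  have : a ∈ H.neighborSet x \ K.neighborSet x := by rw [ha]; rfl
  exact ⟨a, hx, this.1, this.2⟩

theorem hasC_uniq (hc : IsCubic H) {K : H.Subgraph} (hK : IsCircuit K) {x a b : V}
    (ha : hasC K (x, a)) (hb : hasC K (x, b)) : a = b := by
  obtain ⟨d, hd⟩ := circ_corner hc hK ha.1
  have h1 : a ∈ H.neighborSet x \ K.neighborSet x := ⟨ha.2.1, ha.2.2⟩
  have h2 : b ∈ H.neighborSet x \ K.neighborSet x := ⟨hb.2.1, hb.2.2⟩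
  rw [hd] at h1 h2
  rw [h1, h2]

theorem hasC_adj (hc : IsCubic H) {K : H.Subgraph} (hK : IsCircuit K) {x a y : V}
    (ha : hasC K (x, a)) (hy : H.Adj x y) (hne : a ≠ y) : K.Adj x y := by
  by_contra h
  exact hne (hasC_uniq hc hK ha ⟨ha.1, hy, h⟩)

open scoped Classical in
theorem count_split (hc : IsCubic H) {x a b c : V} (hab : a ≠ b) (hac : a ≠ c) (hbc : b ≠ c)
    (hN : H.neighborSet x = {a, b, c}) (C : Multiset H.Subgraph) (hC : ∀ K ∈ C, IsCircuit K) :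
    C.countP (fun K => s(x, a) ∈ K.edgeSet) =
      C.countP (fun K => hasC K (x, b)) + C.countP (fun K => hasC K (x, c)) := by
  induction C using Multiset.induction with
  | empty => simp
  | cons K C ih =>
    have ih := ih (fun K' h => hC K' (Multiset.mem_cons_of_mem h))
    have hK := hC K (Multiset.mem_cons_self _ _)
    have ha : H.Adj x a := by rw [← mem_neighborSet, hN]; simp
    have hb : H.Adj x b := by rw [← mem_neighborSet, hN]; simp
    have hc' : H.Adj x c := by rw [← mem_neighborSet, hN]; simp
    rw [Multiset.countP_cons, Multiset.countP_cons, Multiset.countP_cons, ih]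
    by_cases h : K.Adj x a
    · obtain ⟨d, hd⟩ := hasC_ex hc hK (K.edge_vert h)
      have hd' : d ∈ H.neighborSet x := hd.2.1
      rw [hN] at hd'
      rcases hd' with rfl | rfl | rfl
      · exact absurd h hd.2.2
      · have h2 : ¬ hasC K (x, c) := fun h2 => hbc (hasC_uniq hc hK hd h2)
        simp [h, hd, h2]; omega
      · have h2 : ¬ hasC K (x, b) := fun h2 => hbc (hasC_uniq hc hK h2 hd)
        simp [h, hd, h2]; omega
    · have h2 : ¬ hasC K (x, c) := fun h2 => h (hasC_adj hc hK h2 ha hac.symm)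
      have h3 : ¬ hasC K (x, b) := fun h2 => h (hasC_adj hc hK h2 ha hab.symm)
      simp [h, h2, h3]

open scoped Classical in
theorem count_one (hc : IsCubic H) {C : Multiset H.Subgraph} (hC : IsCiDC H C) {x a : V}
    (hxa : H.Adj x a) : C.countP (fun K => hasC K (x, a)) = 1 := by
  obtain ⟨b, c, hbc, hba, hca, hN⟩ := exists_two (hc x) (show a ∈ H.neighborSet x from hxa)
  have hb : H.Adj x b := by rw [← mem_neighborSet, hN]; simp
  have hc' : H.Adj x c := by rw [← mem_neighborSet, hN]; simp
  have e1 := count_split hc hba.symm hca.symm hbc hN C hC.1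
  have e2 := count_split (a := b) (b := a) (c := c) hc hba hbc hca.symm
    (by rw [hN, Set.insert_comm]) C hC.1
  have e3 := count_split (a := c) (b := a) (c := b) hc hca hbc.symm hba.symm
    (by rw [hN]; ext; simp; tauto) C hC.1
  rw [hC.2 _ hxa] at e1
  rw [hC.2 _ hb] at e2
  rw [hC.2 _ hc'] at e3
  omega

theorem corner_ex (hc : IsCubic H) {C : Multiset H.Subgraph} (hC : IsCiDC H C) {x a : V}
    (hxa : H.Adj x a) : ∃ K ∈ C, hasC K (x, a) := by
  classical
  have := count_one hc hC hxa
  have h2 : 0 < C.countP (fun K => hasC K (x, a)) := by omega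
  exact Multiset.countP_pos.1 h2

theorem corner_uniq (hc : IsCubic H) {C : Multiset H.Subgraph} (hC : IsCiDC H C) {p : V × V}
    {K L : H.Subgraph} (hK : K ∈ C) (hL : L ∈ C) (h1 : hasC K p) (h2 : hasC L p) : K = L := by
  classical
  obtain ⟨x, a⟩ := p
  have := count_one hc hC h1.2.1
  by_contra hne
  obtain ⟨D, rfl⟩ := Multiset.exists_cons_of_mem hK
  have hL' : L ∈ D := by
    rcases Multiset.mem_cons.1 hL with h | h
    · exact absurd h.symm hne
    · exact h
  rw [Multiset.countP_cons, if_pos h1] at this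
  have h3 : 0 < D.countP (fun K => hasC K (x, a)) := Multiset.countP_pos.2 ⟨L, hL', h2⟩
  simp only at this
  omega

theorem circ_ne (hc : IsCubic H) {K : H.Subgraph} (hK : IsCircuit K) : ∃ p, hasC K p := by
  obtain ⟨x, hx⟩ := hK.1.nonempty
  obtain ⟨a, ha⟩ := hasC_ex hc hK hx
  exact ⟨_, ha⟩

theorem cidc_nodup (hc : IsCubic H) {C : Multiset H.Subgraph} (hC : IsCiDC H C) : C.Nodup := by
  classical
  rw [Multiset.nodup_iff_count_le_one]
  intro K
  by_cases hK : K ∈ C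
  · obtain ⟨p, hp⟩ := circ_ne hc (hC.1 K hK)
    have := count_one hc hC hp.2.1
    rw [← this]
    rw [Multiset.count]
    rw [Multiset.countP_eq_card_filter, Multiset.countP_eq_card_filter]
    apply Multiset.card_le_card
    apply Multiset.monotone_filter_right
    rintro L rfl
    exact hp
  · rw [Multiset.count_eq_zero_of_notMem hK]; omega

theorem sysOf_reach (hc : IsCubic H) {C : Multiset H.Subgraph} (hC : IsCiDC H C) {p q : V × V}
    (h : (sysOf C).Reachable p q) {K : H.Subgraph} (hK : K ∈ C) (hp : hasC K p) : hasC K q := by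
  obtain ⟨w⟩ := h
  induction w with
  | nil => exact hp
  | cons h w ih =>
    apply ih
    obtain ⟨_, _, _, L, hL, h1, h2⟩ := h
    rw [corner_uniq hc hC hK hL hp h1]
    exact h2

theorem sysOf_isSys (hc : IsCubic H) {C : Multiset H.Subgraph} (hC : IsCiDC H C) :
    IsSys H (sysOf C) := by
  refine ⟨?_, ?_, ?_⟩
  · rintro p q ⟨h1, h2, h3, K, hK, h4, h5⟩
    exact ⟨h1, h4.2.1, h2, h5.2.1, h3⟩
  · intro x a y hxa hxy hay
    obtain ⟨K, hK, h⟩ := corner_ex hc hC hxa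
    have hadj := hasC_adj hc (hC.1 K hK) h hxy hay
    obtain ⟨c, hc'⟩ := hasC_ex hc (hC.1 K hK) (K.edge_vert hadj.symm)
    refine ⟨c, hxy, hay, ?_, K, hK, h, hc'⟩
    rintro rfl
    exact hc'.2.2 hadj.symm
  · intro x a b h
    by_cases hxa : H.Adj x a
    · obtain ⟨K, hK, h1⟩ := corner_ex hc hC hxa
      exact hasC_uniq hc (hC.1 K hK) h1 (sysOf_reach hc hC h hK h1)
    · obtain ⟨w⟩ := h
      cases w with
      | nil => rfl
      | cons h w =>
        obtain ⟨_, _, _, K, hK, h1, h2⟩ := h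
        exact absurd h1.2.1 hxa

theorem circ_reach (hc : IsCubic H) {C : Multiset H.Subgraph} (hC : IsCiDC H C) {K : H.Subgraph}
    (hK : K ∈ C) {p q : V × V} (hp : hasC K p) (hq : hasC K q) : (sysOf C).Reachable p q := by
  have key : ∀ x y : K.verts, K.coe.Walk x y → ∀ a b, hasC K (x.1, a) → hasC K (y.1, b) →
      (sysOf C).Reachable (x.1, a) (y.1, b) := by
    intro x y w
    induction w with
    | nil =>
      intro a b ha hb
      rw [hasC_uniq hc (hC.1 K hK) ha hb]
    | @cons x z y h w ih =>
      intro a b ha hb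
      obtain ⟨d, hd⟩ := hasC_ex hc (hC.1 K hK) z.2
      refine Reachable.trans (Adj.reachable ?_) (ih d b hd hb)
      have h' : K.Adj x.1 z.1 := h
      refine ⟨h'.adj_sub, ?_, ?_, K, hK, ha, hd⟩
      · rintro rfl
        exact ha.2.2 h'
      · rintro rfl
        exact hd.2.2 h'.symm
  obtain ⟨w⟩ := (hC.1 K hK).1.preconnected ⟨p.1, hp.1⟩ ⟨q.1, hq.1⟩
  exact key _ _ w p.2 q.2 hp hq

theorem circ_le (hc : IsCubic H) {K L : H.Subgraph} (hK : IsCircuit K) (hL : IsCircuit L)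
    (h : ∀ p, hasC K p → hasC L p) : K ≤ L := by
  constructor
  · intro x hx
    obtain ⟨a, ha⟩ := hasC_ex hc hK hx
    exact (h _ ha).1
  · intro x y hxy
    obtain ⟨a, ha⟩ := hasC_ex hc hK (K.edge_vert hxy)
    apply hasC_adj hc hL (h _ ha) hxy.adj_sub
    rintro rfl
    exact ha.2.2 hxy

theorem sysOf_inj (hc : IsCubic H) {C D : Multiset H.Subgraph} (hC : IsCiDC H C)
    (hD : IsCiDC H D) (h : sysOf C = sysOf D) : C = D := by
  have key : ∀ {C D : Multiset H.Subgraph}, IsCiDC H C → IsCiDC H D → sysOf C = sysOf D →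
      ∀ K ∈ C, K ∈ D := by
    intro C D hC hD h K hK
    obtain ⟨p, hp⟩ := circ_ne hc (hC.1 K hK)
    obtain ⟨L, hL, hLp⟩ := corner_ex hc hD hp.2.1
    have : K = L := by
      apply le_antisymm
      · apply circ_le hc (hC.1 K hK) (hD.1 L hL)
        intro q hq
        have := circ_reach hc hC hK hp hq
        rw [h] at this
        exact sysOf_reach hc hD this hL hLp
      · apply circ_le hc (hD.1 L hL) (hC.1 K hK)
        intro q hq
        have := circ_reach hc hD hL hLp hq
        rw [← h] at this
        exact sysOf_reach hc hC this hK hp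
    rw [this]; exact hL
  rw [Multiset.Nodup.ext (cidc_nodup hc hC) (cidc_nodup hc hD)]
  exact fun K => ⟨key hC hD h K, key hD hC h.symm K⟩

end circ


section surj
variable {V : Type*} {H : SimpleGraph V}

/-- The subgraph traced by the component of the corner `p`. -/
def trace {M : SimpleGraph (V × V)} (hM : IsSys H M) (p : V × V) : H.Subgraph where
  verts := {x | ∃ c, H.Adj x c ∧ M.Reachable p (x, c)}
  Adj x y := ∃ c d, M.Adj (x, c) (y, d) ∧ M.Reachable p (x, c)
  adj_sub := by
    rintro x y ⟨c, d, h, _⟩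
    exact (hM.adj _ _ h).1
  edge_vert := by
    rintro x y ⟨c, d, h, h2⟩
    exact ⟨c, (hM.adj _ _ h).2.1, h2⟩
  symm := ⟨by
    rintro x y ⟨c, d, h, h2⟩
    exact ⟨d, c, h.symm, h2.trans h.reachable⟩⟩

theorem trace_adj {M : SimpleGraph (V × V)} (hM : IsSys H M) {p : V × V} {x c y : V}
    (hx : M.Reachable p (x, c)) (hc : H.Adj x c) :
    (trace hM p).Adj x y ↔ H.Adj x y ∧ y ≠ c := by
  constructor
  · rintro ⟨c', d, h, h2⟩
    have := hM.valid _ _ _ (hx.symm.trans h2)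
    subst this
    exact ⟨(hM.adj _ _ h).1, fun h3 => (hM.adj _ _ h).2.2.1 h3.symm⟩
  · rintro ⟨h1, h2⟩
    obtain ⟨d, hd⟩ := hM.ex x c y hc h1 h2.symm
    exact ⟨c, d, hd, hx⟩

theorem trace_hasC {M : SimpleGraph (V × V)} (hM : IsSys H M) {p q : V × V} :
    hasC (trace hM p) q ↔ H.Adj q.1 q.2 ∧ M.Reachable p q := by
  obtain ⟨x, a⟩ := q
  constructor
  · rintro ⟨⟨c, hc, h⟩, h2, h3⟩
    refine ⟨h2, ?_⟩
    rw [trace_adj hM h hc] at h3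
    have : a = c := by
      by_contra hne
      exact h3 ⟨h2, hne⟩
    subst this
    exact h
  · rintro ⟨h1, h2⟩
    refine ⟨⟨a, h1, h2⟩, h1, ?_⟩
    rw [trace_adj hM h2 h1]
    simp

theorem trace_circuit (hc : IsCubic H) {M : SimpleGraph (V × V)} (hM : IsSys H M) {p : V × V}
    (hp : H.Adj p.1 p.2) : IsCircuit (trace hM p) := by
  constructor
  · have key : ∀ p q : V × V, M.Walk p q → ∀ (hp : H.Adj p.1 p.2) (hq : H.Adj q.1 q.2)
        (r : V × V) (h1 : M.Reachable r p) (h2 : M.Reachable r q),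
        (trace hM r).coe.Reachable ⟨p.1, p.2, hp, h1⟩ ⟨q.1, q.2, hq, h2⟩ := by
      intro p q w
      induction w with
      | nil => intro _ _ r _ _; rfl
      | @cons p z q h w ih =>
        intro hp hq r h1 h2
        have hz : H.Adj z.1 z.2 := (hM.adj _ _ h).2.2.2.1
        refine Reachable.trans (Adj.reachable ?_) (ih hz hq r (h1.trans h.reachable) h2)
        exact ⟨p.2, z.2, h, h1⟩
    rw [Subgraph.connected_iff']
    rw [connected_iff]
    refine ⟨?_, ?_⟩
    · rintro ⟨x, c, hx, h1⟩ ⟨y, d, hy, h2⟩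
      obtain ⟨w⟩ := h1.symm.trans h2
      exact key _ _ w hx hy p h1 h2
    · exact ⟨⟨p.1, p.2, hp, Reachable.refl _⟩⟩
  · rintro x ⟨c, hxc, h⟩
    have : (trace hM p).neighborSet x = H.neighborSet x \ {c} := by
      ext y
      rw [Subgraph.mem_neighborSet, trace_adj hM h hxc]
      simp
    rw [this, Set.ncard_sdiff_singleton_of_mem (show c ∈ H.neighborSet x from hxc), hc x]

theorem trace_eq (hc : IsCubic H) {M : SimpleGraph (V × V)} (hM : IsSys H M) {p q : V × V}
    (hp : H.Adj p.1 p.2) (hq : H.Adj q.1 q.2) (h : M.Reachable p q) :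
    trace hM p = trace hM q := by
  apply le_antisymm
  · apply circ_le hc (trace_circuit hc hM hp) (trace_circuit hc hM hq)
    intro r hr
    rw [trace_hasC] at hr ⊢
    exact ⟨hr.1, h.symm.trans hr.2⟩
  · apply circ_le hc (trace_circuit hc hM hq) (trace_circuit hc hM hp)
    intro r hr
    rw [trace_hasC] at hr ⊢
    exact ⟨hr.1, h.trans hr.2⟩

theorem sysOf_surj [Finite V] (hc : IsCubic H) {M : SimpleGraph (V × V)} (hM : IsSys H M) :
    ∃ C : Multiset H.Subgraph, IsCiDC H C ∧ sysOf C = M := by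
  classical
  have := Fintype.ofFinite V
  let S : Finset H.Subgraph :=
    (Finset.univ.filter (fun p : V × V => H.Adj p.1 p.2)).image (trace hM)
  have memS : ∀ K, K ∈ S.val ↔ ∃ p : V × V, H.Adj p.1 p.2 ∧ trace hM p = K := by
    intro K
    simp [S]
  refine ⟨S.val, ⟨?_, ?_⟩, ?_⟩
  · intro K hK
    obtain ⟨p, hp, rfl⟩ := (memS K).1 hK
    exact trace_circuit hc hM hp
  · intro e
    induction e using Sym2.ind with
    | _ x y =>
    intro hxy
    rw [mem_edgeSet] at hxy
    obtain ⟨a, b, hab, hay, hby, hN⟩ := exists_two (hc x) (show y ∈ H.neighborSet x from hxy)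
    have ha : H.Adj x a := by rw [← mem_neighborSet, hN]; simp
    have hb : H.Adj x b := by rw [← mem_neighborSet, hN]; simp
    have hne : trace hM (x, a) ≠ trace hM (x, b) := by
      intro h
      have h1 : hasC (trace hM (x, a)) (x, a) := (trace_hasC hM).2 ⟨ha, Reachable.refl _⟩
      rw [h, trace_hasC] at h1
      exact hab (hM.valid _ _ _ h1.2).symm
    rw [Multiset.countP_eq_card_filter]
    have : S.val.filter (fun K => s(x, y) ∈ K.edgeSet) =
        ({trace hM (x, a), trace hM (x, b)} : Finset H.Subgraph).val := by
      rw [← Finset.filter_val]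
      congr 1
      ext K
      rw [Finset.mem_filter, ← Finset.mem_val, memS]
      simp only [Subgraph.mem_edgeSet, Finset.mem_insert, Finset.mem_singleton]
      constructor
      · rintro ⟨⟨p, hp, rfl⟩, c, d, h1, h2⟩
        have h3 := hM.adj _ _ h1
        have hcN : c ∈ H.neighborSet x := h3.2.1
        rw [hN] at hcN
        rcases hcN with rfl | rfl | rfl
        · exact absurd rfl h3.2.2.1
        · left; exact trace_eq hc hM hp ha h2
        · right; exact trace_eq hc hM hp hb h2
      · rintro (rfl | rfl)
        · exact ⟨⟨_, ha, rfl⟩, (trace_adj hM (Reachable.refl _) ha).2 ⟨hxy, hay.symm⟩⟩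
        · exact ⟨⟨_, hb, rfl⟩, (trace_adj hM (Reachable.refl _) hb).2 ⟨hxy, hby.symm⟩⟩
    rw [this]
    exact Finset.card_pair hne
  · ext p q
    constructor
    · rintro ⟨h1, h2, h3, K, hK, h4, h5⟩
      obtain ⟨r, hr, rfl⟩ := (memS K).1 hK
      rw [trace_hasC] at h4 h5
      obtain ⟨d, hd⟩ := hM.ex p.1 p.2 q.1 h4.1 h1 h2
      have : d = q.2 := hM.valid q.1 _ _ (hd.symm.reachable.trans (h4.2.symm.trans h5.2))
      rw [this] at hd
      exact hd
    · intro h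
      obtain ⟨h1, h2, h3, h4, h5⟩ := hM.adj _ _ h
      exact ⟨h1, h3, h5, trace hM p, (memS _).2 ⟨p, h2, rfl⟩,
        (trace_hasC hM).2 ⟨h2, Reachable.refl _⟩, (trace_hasC hM).2 ⟨h4, h.reachable⟩⟩

theorem nu_eq [Finite V] (hc : IsCubic H) : nu H = Nat.card {M // IsSys H M} := by
  unfold nu
  rw [← Nat.card_coe_set_eq]
  apply Nat.card_congr
  refine Equiv.ofBijective (fun C => ⟨sysOf C.1, sysOf_isSys hc C.2⟩) ⟨?_, ?_⟩
  · rintro ⟨C, hC⟩ ⟨D, hD⟩ h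
    have h' : sysOf C = sysOf D := congrArg Subtype.val h
    exact Subtype.ext (sysOf_inj hc hC hD h')
  · rintro ⟨M, hM⟩
    obtain ⟨C, hC, h⟩ := sysOf_surj hc hM
    exact ⟨⟨C, hC⟩, Subtype.ext h⟩

end surj


/-! ### The finite part of the argument -/

/-- Hexadecimal digit number `t` of `P`. -/
def dg (P t : ℕ) : ℕ := (P >>> (4 * t)) % 16

/-- The code of a terminal. -/
def cd (j : Fin 5) (s : Bool) : ℕ := 2 * j.val + s.toNat

/-- The pairings of the ten terminals, up to relabelling. -/
def types : List ℕ := [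
  487837614210, 504952471650, 349026345090, 504985903170,
  357582733410, 496427434050, 487799678340, 496356066660,
  211836507780, 357045405540, 348707255430, 211803083910,
  505002987570, 496371795540, 356760323190, 70119482520,
  487750521990, 348740679300, 216114698340, 211870453890,
  361609326690, 509359509570]

/-- Rows: the pairing, some realised states, and a list of (state, image, colouring). -/
def table : List (ℕ × List ℕ × List (ℕ × ℕ × ℕ)) := [
  (487837614210, [6, 19, 41],
    [(6, 896, 1152920892394909712), (19, 897, 1152920892394909712), (41, 1144, 6605253558472720), (60, 1145, 6605253558472720), (79, 1138, 4806176583921680)]),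
  (487837614210, [6, 19],
    [(6, 896, 1152920892394909712), (19, 897, 1152920892394909712), (60, 1144, 6605253558472720), (79, 1145, 6605253558472720)]),
  (487837614210, [19, 41],
    [(19, 896, 1152920892394909712), (41, 897, 1152920892394909712), (60, 1138, 4806176583921680), (79, 1139, 4806176583921680)]),
  (487837614210, [41, 60],
    [(6, 896, 1152920892394909712), (41, 897, 1152920892394909712), (60, 1126, 21101997666320), (79, 1127, 21101997666320)]),
  (487837614210, [],
    [(6, 896, 1152920892394909712), (41, 897, 1152920892394909712)]),
  (487837614210, [60, 79],
    [(6, 896, 1152920892394909712), (19, 897, 1152920892394909712), (60, 1102, 229704476029825040), (79, 1103, 229704476029825040)]),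
  (487837614210, [],
    [(19, 896, 1152920892394909712), (60, 897, 1152920892394909712)]),
  (487837614210, [79, 6],
    [(6, 896, 1152920892394909712), (41, 897, 1152920892394909712), (60, 1116, 364885032689537040), (79, 1117, 364885032689537040)]),
  (487837614210, [],
    [(41, 896, 1152920892394909712), (79, 897, 1152920892394909712)]),
  (487837614210, [],
    [(6, 896, 1152920892394909712), (60, 897, 1152920892394909712)]),
  (487837614210, [],
    [(19, 896, 1152920892394909712), (79, 897, 1152920892394909712)]),
  (504952471650, [],
    [(4, 612, 93962900672528), (27, 586, 229986429625905168), (41, 1126, 21101997666320), (60, 897, 1152920892323606544), (79, 896, 1152920892323606544)]),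
  (349026345090, [],
    [(8, 1124, 93807476740112), (16, 128, 1152920616676110352), (41, 925, 311667915031326736), (53, 129, 1152920616676110352), (65, 924, 311667915031326736)]),
  (504985903170, [],
    [(4, 612, 93962900672528), (27, 576, 1152920888027451408), (43, 870, 21386574770192), (52, 685, 77499581529665552), (64, 684, 77499581529665552)]),
  (357582733410, [],
    [(8, 925, 311104965044342800), (31, 1204, 86506633916854288), (43, 103, 20973417148432), (61, 102, 20973417148432), (65, 924, 311104965044342800)]),
  (496427434050, [],
    [(6, 897, 1152920892394770448), (19, 896, 1152920892394770448), (43, 1172, 374736734452264976), (52, 871, 21386610421776), (79, 870, 21386610421776)]),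
  (487799678340, [],
    [(5, 513, 1152920892307669520), (19, 512, 1152920892307669520), (32, 1522, 4805008086270480), (50, 911, 153969498546778640), (65, 910, 153969498546778640)]),
  (496356066660, [],
    [(7, 960, 1152920888028430608), (27, 970, 153424136450867728), (47, 619, 302861516812816), (50, 910, 153406548559794704), (65, 618, 302861516812816)]),
  (211836507780, [],
    [(11, 540, 360944384307364368), (18, 640, 1152920616357081104), (40, 660, 374736864291074064), (54, 407, 158472822745739792), (71, 406, 158472822745739792)]),
  (357045405540, [],
    [(8, 890, 22820720338808848), (27, 319, 95142197704274448), (43, 111, 583922833437200), (50, 318, 95142197704274448), (78, 110, 583922833437200)]),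
  (348707255430, [],
    [(12, 794, 238694427488563728), (18, 650, 153124797615845904), (40, 640, 1152920616357081104), (59, 143, 153969016384401936), (77, 142, 153969016384401936)]),
  (211803083910, [],
    [(3, 1394, 4806177125970448), (18, 650, 153124797615845904), (40, 660, 374736864291074064), (57, 257, 1152920410737738256), (69, 256, 1152920410737738256)]),
  (505002987570, [],
    [(4, 676, 76936631593209872), (18, 613, 93962951200784), (27, 577, 1152920888077979664), (72, 576, 1152920888077979664), (75, 612, 93962951200784)]),
  (496371795540, [],
    [(4, 641, 1152920892306624528), (7, 961, 1152920888028430608), (18, 640, 1152920892306624528), (27, 960, 1152920888028430608), (42, 815, 77127937988506128), (47, 814, 77127937988506128), (67, 623, 584336509252112), (70, 622, 584336509252112)]),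
  (356760323190, [],
    [(9, 1268, 14449039056646416), (12, 1716, 86506633094508560), (42, 827, 94579247465771536), (47, 826, 94579247465771536), (56, 379, 22820720590598672), (59, 143, 153406065894101520), (68, 378, 22820720590598672), (77, 142, 153406065894101520)]),
  (70119482520, [],
    [(2, 321, 1152920475179029008), (11, 732, 365729523352809744), (56, 339, 220978817556165136), (59, 320, 1152920475179029008), (68, 338, 220978817556165136)]),
  (487750521990, [],
    [(4, 641, 1152920892308729872), (7, 768, 1152920892305703440), (18, 651, 153125073567494672), (33, 650, 153125073567494672), (40, 640, 1152920892308729872)]),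
  (348740679300, [],
    [(9, 799, 239257377475408400), (12, 798, 239257377475408400), (17, 1, 1152920546864792080), (18, 641, 1152920616357081104), (33, 0, 1152920546864792080), (40, 640, 1152920616357081104), (51, 415, 167480158902563344), (54, 414, 167480158902563344)]),
  (216114698340, [],
    [(2, 321, 1152920475178897424), (11, 540, 360662909313876240), (26, 746, 301481759617552), (31, 1335, 81631257893548560), (51, 1334, 81631257893548560), (54, 439, 86415232986001936), (68, 320, 1152920475178897424), (71, 438, 86415232986001936)]),
  (211870453890, [],
    [(17, 385, 1152920616946577424), (18, 640, 1152920616424452112), (40, 405, 302660578622844944), (52, 404, 302660578622844944), (61, 384, 1152920616946577424)]),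
  (361609326690, [],
    [(26, 858, 238993490372997136), (31, 1212, 91010237570756624), (40, 641, 1152920616373923856), (43, 103, 20973148647440), (52, 640, 1152920616373923856), (61, 102, 20973148647440), (73, 445, 95495145500454928), (76, 444, 95495145500454928)]),
  (509359509570, [],
    [(40, 641, 1152920892325572624), (43, 870, 21386574770192), (52, 681, 78362702500671504), (66, 680, 78362702500671504), (75, 640, 1152920892325572624)])]

/-- The code of a state of the reduced graph. -/
def ncode (i : Fin 5) (b0 b2 b3 b4 : Bool) : ℕ :=
  16 * i.val + b0.toNat + 2 * b2.toNat + 4 * b3.toNat + 8 * b4.toNat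

/-- The pairing of terminals given by a state of the reduced graph. -/
def bh (n t : ℕ) : ℕ :=
  let i := n / 16
  let s := t % 2
  let b0 := n % 2
  let b2 := n / 2 % 2
  let b3 := n / 4 % 2
  let b4 := n / 8 % 2
  match (t / 2 + 5 - i) % 5 with
  | 0 => 2 * ((i + 1) % 5) + (s + b0) % 2
  | 1 => 2 * i + (s + b0) % 2
  | 2 => if s = b2 then 2 * ((i + 3) % 5) + (1 - b3) else 2 * ((i + 4) % 5) + b4
  | 3 => if s = b3 then 2 * ((i + 4) % 5) + (1 - b4) else 2 * ((i + 2) % 5) + b2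
  | _ => if s = b4 then 2 * ((i + 2) % 5) + (1 - b2) else 2 * ((i + 3) % 5) + b3

/-- Two terminals are joined in the reduced graph. -/
def jn (P n : ℕ) : ℕ → ℕ → ℕ → Bool
  | 0, _, _ => false
  | k + 1, t, t' => t' == t || (t' == dg P t || jn P n k (bh n (dg P t)) t')

def validN (P n : ℕ) : Bool :=
  let i := n / 16
  let x := 2 * ((i + 2) % 5) + n / 2 % 2
  let y := 2 * ((i + 3) % 5) + n / 4 % 2
  let z := 2 * ((i + 4) % 5) + n / 8 % 2
  [0, 2, 4, 6, 8].all (fun t => !jn P n 5 t (t + 1)) && !jn P n 5 x y && !jn P n 5 y z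
    && !jn P n 5 z x

/-- The links of a state of the reduced graph. -/
def facts (i : Fin 5) (b0 b2 b3 b4 : Bool) : List (ℕ × ℕ) :=
  [(cd i false, cd (i + 1) b0), (cd i true, cd (i + 1) (!b0)), (cd (i + 2) b2, cd (i + 3) (!b3)),
    (cd (i + 3) b3, cd (i + 4) (!b4)), (cd (i + 4) b4, cd (i + 2) (!b2))]

set_option maxRecDepth 100000 in
theorem bh_facts : ∀ (i : Fin 5) (b0 b2 b3 b4 : Bool), ∀ t < 10,
    bh (ncode i b0 b2 b3 b4) t < 10 ∧
    ((t, bh (ncode i b0 b2 b3 b4) t) ∈ facts i b0 b2 b3 b4 ∨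
      (bh (ncode i b0 b2 b3 b4) t, t) ∈ facts i b0 b2 b3 b4) := by
  decide +kernel

theorem dg_lt : ∀ P ∈ types, ∀ t < 10, dg P t < 10 := by
  decide +kernel

/-- colours of the corners on the pentagon -/
def N0 (c g : ℕ) (j : Fin 5) : ℕ := dg c (cd j (g.testBit (5 + j.val)))
def N1 (c g : ℕ) (j : Fin 5) : ℕ := dg c (cd j (!g.testBit (5 + j.val)))
def N2 (c : ℕ) (j : Fin 5) : ℕ := dg c (10 + j.val)

/-- `c` is a good colouring for the state `g` of the pentagon. -/
def GoodCol (P g c : ℕ) : Prop :=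
  (∀ t < 10, dg c (dg P t) = dg c t) ∧
  (∀ j : Fin 5, N0 c g j = (if g.testBit j.val then N2 c (j + 1) else N1 c g (j + 1)) ∧
    N2 c j = (if g.testBit j.val then N1 c g (j + 1) else N2 c (j + 1))) ∧
  (∀ j : Fin 5, N0 c g j ≠ N1 c g j ∧ N0 c g j ≠ N2 c j ∧ N1 c g j ≠ N2 c j)

instance (P g c : ℕ) : Decidable (GoodCol P g c) := by unfold GoodCol; infer_instance

def RowOK (P : ℕ) (A0 : List ℕ) (en : List (ℕ × ℕ × ℕ)) : Prop :=
  (∀ e ∈ en, e.2.1 < 2048 ∧ GoodCol P (e.2.1 / 2) e.2.2 ∧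
    ∀ t < 10, ∀ t' < 10, dg e.2.2 t = dg e.2.2 t' →
      (∃ n ∈ e.1 :: A0, jn P n 5 t t' = true)) ∧
  en.Pairwise (fun e e' => e.2.1 ≠ e'.2.1)

instance (P : ℕ) (A0 : List ℕ) (en : List (ℕ × ℕ × ℕ)) : Decidable (RowOK P A0 en) := by
  unfold RowOK; infer_instance

theorem table_ok : ∀ r ∈ table, RowOK r.1 r.2.1 r.2.2 := by
  decide +kernel

def subs : List ℕ → List (List ℕ)
  | [] => [[]]
  | a :: l => subs l ++ (subs l).map (a :: ·)

def states : List ℕ := List.range 80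

theorem table_cover : ∀ P ∈ types, ∀ l ∈ subs (states.filter (fun n => validN P n)),
    ∃ r ∈ table, r.1 = P ∧ (∀ n ∈ r.2.1, n ∈ l) ∧ (∀ n ∈ l, n ∈ r.2.2.map (·.1)) := by
  decide +kernel


theorem filter_mem_subs (p : ℕ → Bool) : ∀ l : List ℕ, l.filter p ∈ subs l
  | [] => by simp [subs]
  | a :: l => by
    have ih := filter_mem_subs p l
    by_cases h : p a <;> simp [subs, h, ih]

theorem fin_main {P : ℕ} (hP : P ∈ types) (A : ℕ → Prop)
    (hA : ∀ n, A n → n < 80 ∧ validN P n = true) :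
    ∃ φ : ℕ → ℕ, (∀ n, A n → φ n < 2048 ∧ ∃ c, GoodCol P (φ n / 2) c ∧
      ∀ t < 10, ∀ t' < 10, dg c t = dg c t' → ∃ n', A n' ∧ jn P n' 5 t t' = true) ∧
    (∀ n n', A n → A n' → φ n = φ n' → n = n') := by
  classical
  set L := states.filter (fun n => validN P n) with hL
  obtain ⟨r, hr, hrP, h0, hk⟩ := table_cover P hP _ (filter_mem_subs (fun n => decide (A n)) L)
  have hmem : ∀ n, n ∈ L.filter (fun n => decide (A n)) ↔ A n := by
    intro n
    simp only [hL, states, List.mem_filter, List.mem_range, decide_eq_true_eq]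
    exact ⟨fun h => h.2, fun h => ⟨hA n h, h⟩⟩
  obtain ⟨hent, hpw⟩ := table_ok r hr
  subst hrP
  have hex : ∀ n, ∃ e, A n → e ∈ r.2.2 ∧ e.1 = n := by
    intro n
    by_cases h : A n
    · obtain ⟨e, he, hen⟩ := List.mem_map.1 (hk n ((hmem n).2 h))
      exact ⟨e, fun _ => ⟨he, hen⟩⟩
    · exact ⟨(0, 0, 0), fun h' => absurd h' h⟩
  choose e he using hex
  refine ⟨fun n => (e n).2.1, ?_, ?_⟩
  · intro n hn
    obtain ⟨h1, h2, h3⟩ := hent (e n) (he n hn).1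
    refine ⟨h1, (e n).2.2, h2, ?_⟩
    intro t ht t' ht' heq
    obtain ⟨m, hm, hj⟩ := h3 t ht t' ht' heq
    refine ⟨m, ?_, hj⟩
    rcases List.mem_cons.1 hm with rfl | hm
    · rw [(he n hn).2]; exact hn
    · exact (hmem m).1 (h0 m hm)
  · intro n n' hn hn' heq
    by_contra hne
    have h1 := he n hn
    have h2 := he n' hn'
    have hne' : e n ≠ e n' := by
      intro h
      rw [h] at h1
      exact hne (h1.2.symm.trans h2.2)
    have : Std.Symm (fun e e' : ℕ × ℕ × ℕ => e.2.1 ≠ e'.2.1) := ⟨fun _ _ h => Ne.symm h⟩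
    exact (List.Pairwise.forall hpw h1.1 h2.1 hne') heq

/-- Extension step in the enumeration of all pairings. -/
def extOK (l : List ℕ) (y : ℕ) : Bool :=
  y != l.length && y / 2 != l.length / 2 &&
    (List.zip l [0, 1, 2, 3, 4, 5, 6, 7, 8, 9]).all
      (fun e => ((e.1 == l.length) == (y == e.2)) && e.1 != y)

def gen : ℕ → List (List ℕ)
  | 0 => [[]]
  | k + 1 => (gen k).flatMap (fun l =>
      ([0, 1, 2, 3, 4, 5, 6, 7, 8, 9].filter (extOK l)).map (fun y => l ++ [y]))

/-- relabelling mask -/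
def mask (l : List ℕ) (j : ℕ) : ℕ :=
  let a := l.getD (2 * j) 0 / 2
  let b := l.getD (2 * j + 1) 0 / 2
  if a < b then 0 else if b < a then 1 else if j < a then 0 else l.getD (2 * a) 0 % 2

def rel (m : ℕ → ℕ) (t : ℕ) : ℕ := 2 * (t / 2) + (t % 2 + m (t / 2)) % 2

theorem gen_ok : ∀ l ∈ gen 10, ∃ P ∈ types, ∀ t < 10,
    l.getD (rel (mask l) t) 0 = rel (mask l) (dg P t) := by
  decide +kernel



theorem range_mem_gen (f : ℕ → ℕ) (hlt : ∀ t < 10, f t < 10) (hinv : ∀ t < 10, f (f t) = t)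
    (hne : ∀ t < 10, f t / 2 ≠ t / 2) : ∀ k ≤ 10, (List.range k).map f ∈ gen k := by
  intro k
  induction k with
  | zero => intro _; simp [gen]
  | succ k ih =>
    intro hk
    have ih := ih (by omega)
    rw [List.range_succ, List.map_append, gen, List.mem_flatMap]
    refine ⟨_, ih, ?_⟩
    rw [List.mem_map]
    refine ⟨f k, ?_, rfl⟩
    rw [List.mem_filter]
    constructor
    · have := hlt k (by omega)
      generalize f k = y at this
      interval_cases y <;> simp
    · have h1 := hne k (by omega)
      have h2 : f k ≠ k := fun h => h1 (by rw [h])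
      simp only [extOK, List.length_map, List.length_range, Bool.and_eq_true, bne_iff_ne, ne_eq,
        List.all_eq_true, beq_iff_eq]
      refine ⟨⟨h2, h1⟩, ?_⟩
      intro e he
      rw [List.mem_iff_getElem] at he
      obtain ⟨i, hi, rfl⟩ := he
      have hik : i < k := by
        simp at hi; omega
      have h10 : ([0, 1, 2, 3, 4, 5, 6, 7, 8, 9] : List ℕ)[i]'(by simp; omega) = i := by
        have : i < 10 := by omega
        interval_cases i <;> rfl
      simp only [List.getElem_zip, List.getElem_map, List.getElem_range, h10]
      constructor
      · have : f i = k ↔ f k = i := by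
          constructor
          · intro h; rw [← h]; exact hinv i (by omega)
          · intro h; rw [← h]; exact hinv k (by omega)
        by_cases h : f i = k
        · have h' := this.1 h
          simp [h, h']
        · have h' : ¬ f k = i := fun h' => h (this.2 h')
          have e1 : (f i == k) = false := by simpa using h
          have e2 : (f k == i) = false := by simpa using h'
          rw [e1, e2]
      · intro h
        have := congrArg f h
        rw [hinv i (by omega), hinv k (by omega)] at this
        omega

theorem classify (f : ℕ → ℕ) (hlt : ∀ t < 10, f t < 10) (hinv : ∀ t < 10, f (f t) = t)
    (hne : ∀ t < 10, f t / 2 ≠ t / 2) :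
    ∃ P ∈ types, ∃ m : ℕ → ℕ, ∀ t < 10, f (rel m t) = rel m (dg P t) := by
  obtain ⟨P, hP, h⟩ := gen_ok _ (range_mem_gen f hlt hinv hne 10 le_rfl)
  refine ⟨P, hP, mask ((List.range 10).map f), ?_⟩
  intro t ht
  rw [← h t ht]
  have : ∀ m, rel m t < 10 := by
    intro m
    unfold rel
    omega
  rw [List.getD_eq_getElem?_getD]
  simp [this]



theorem deg_pair_conn {W : Type*} [Finite W] (H : SimpleGraph W) (hH : H.Connected)
    (hd : ∀ x, (H.neighborSet x).ncard = 1 ∨ (H.neighborSet x).ncard = 2) (x : W)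
    (hx : (H.neighborSet x).ncard = 1) :
    ∃ y, y ≠ x ∧ (H.neighborSet y).ncard = 1 ∧
      ∀ z, (H.neighborSet z).ncard = 1 → z = x ∨ z = y := by
  classical
  have := Fintype.ofFinite W
  have hdeg : ∀ z, (H.neighborSet z).ncard = H.degree z := by
    intro z
    rw [← card_neighborSet_eq_degree, Set.ncard_eq_toFinset_card', Set.toFinset_card]
  simp only [hdeg] at *
  have h1 := H.sum_degrees_eq_twice_card_edges
  have h2 := hH.card_vert_le_card_edgeSet_add_one
  rw [Nat.card_eq_fintype_card, Nat.card_eq_fintype_card, ← edgeFinset_card] at h2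
  have h3 : ∑ z, H.degree z + (Finset.univ.filter (fun z => H.degree z = 1)).card
      = 2 * Fintype.card W := by
    rw [Finset.card_filter, ← Finset.sum_add_distrib]
    rw [Finset.sum_congr rfl (g := fun _ => 2)]
    · simp [mul_comm]
    · intro z _
      rcases hd z with h | h <;> simp [h]
  have h4 : 0 < (Finset.univ.filter (fun z => H.degree z = 1)).card :=
    Finset.card_pos.2 ⟨x, by simp [hx]⟩
  have h5 : (Finset.univ.filter (fun z => H.degree z = 1)).card = 2 := by omega
  have h6 : ((Finset.univ.filter (fun z => H.degree z = 1)).erase x).card = 1 := by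
    rw [Finset.card_erase_of_mem (by simp [hx]), h5]
  obtain ⟨y, hy⟩ := Finset.card_eq_one.1 h6
  have hm : ∀ z, (z ≠ x ∧ H.degree z = 1) ↔ z = y := by
    intro z
    have := congrArg (fun s => z ∈ s) hy
    simpa using this
  refine ⟨y, ((hm y).2 rfl).1, ((hm y).2 rfl).2, ?_⟩
  intro z hz
  by_cases h : z = x
  · exact Or.inl h
  · exact Or.inr ((hm z).1 ⟨h, hz⟩)

theorem deg_pair {W : Type*} [Finite W] (H : SimpleGraph W) (x : W)
    (hd : ∀ z, H.Reachable x z → (H.neighborSet z).ncard = 1 ∨ (H.neighborSet z).ncard = 2)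
    (hx : (H.neighborSet x).ncard = 1) :
    ∃ y, y ≠ x ∧ H.Reachable x y ∧ (H.neighborSet y).ncard = 1 ∧
      ∀ z, H.Reachable x z → (H.neighborSet z).ncard = 1 → z = x ∨ z = y := by
  let C := H.connectedComponentMk x
  have hm : ∀ z, z ∈ C ↔ H.Reachable x z := by
    intro z
    change H.connectedComponentMk z = C ↔ _
    exact ⟨fun h => (ConnectedComponent.exact h).symm, fun h => ConnectedComponent.sound h.symm⟩
  have hn : ∀ z : C, (C.toSimpleGraph.neighborSet z).ncard = (H.neighborSet z.1).ncard := by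
    intro z
    rw [← Set.ncard_image_of_injective _ Subtype.val_injective]
    congr 1
    ext w
    simp only [Set.mem_image, mem_neighborSet]
    constructor
    · rintro ⟨w, hw, rfl⟩
      exact hw
    · intro h
      exact ⟨⟨w, (hm w).2 (((hm z.1).1 z.2).trans h.reachable)⟩, h, rfl⟩
  obtain ⟨y, h1, h2, h3⟩ := deg_pair_conn C.toSimpleGraph C.connected_toSimpleGraph
    (fun z => by rw [hn]; exact hd _ ((hm _).1 z.2)) ⟨x, (hm x).2 (Reachable.refl _)⟩
    (by rw [hn]; exact hx)
  refine ⟨y.1, fun h => h1 (Subtype.ext h), (hm _).1 y.2, by rw [← hn]; exact h2, ?_⟩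
  intro z hz hz1
  have := h3 ⟨z, (hm z).2 hz⟩ (by rw [hn]; exact hz1)
  simpa [Subtype.ext_iff] using this

structure Setup {V : Type*} (G : SimpleGraph V) (v u : Fin 5 → V) : Prop where
  cubic : IsCubic G
  hC4 : ∀ a b c d : V, a ≠ c → b ≠ d → ¬(G.Adj a b ∧ G.Adj b c ∧ G.Adj c d ∧ G.Adj d a)
  vinj : Function.Injective v
  cyc : ∀ i : Fin 5, G.Adj (v i) (v (i + 1))
  uadj : ∀ i : Fin 5, G.Adj (v i) (u i)
  uinj : Function.Injective u
  uv : ∀ i j : Fin 5, u i ≠ v j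

def out {V : Type*} (v : Fin 5 → V) (x : V) : Prop := ∀ j, x ≠ v j

section
variable {V : Type*} {G : SimpleGraph V} {v u : Fin 5 → V}

theorem Setup.vnbr (S : Setup G v u) (j : Fin 5) (x : V) :
    G.Adj (v j) x ↔ x = v (j+1) ∨ x = v (j+4) ∨ x = u j := by
  have h4 : G.Adj (v j) (v (j+4)) := by
    have := S.cyc (j+4)
    rw [add_assoc, show (4 + 1 : Fin 5) = 0 from rfl, add_zero] at this
    exact this.symm
  have hne : v (j+1) ≠ v (j+4) := by
    intro h
    have := S.vinj h
    clear h h4; revert this; revert j; decide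
  have := three_mem (S.cubic (v j)) (a := v (j+1)) (b := v (j+4)) (c := u j) (S.cyc j) h4 (S.uadj j)
    hne (fun h => S.uv _ _ h.symm) (fun h => S.uv _ _ h.symm)
  have := Set.ext_iff.1 this x
  simpa using this

theorem Setup.out_u (S : Setup G v u) (j : Fin 5) : out v (u j) := fun k => S.uv j k

theorem Setup.out_adj (S : Setup G v u) {x : V} (hx : out v x) {j : Fin 5} (h : G.Adj x (v j)) :
    x = u j := by
  rcases (S.vnbr j x).1 h.symm with h | h | h
  · exact absurd h (hx _)
  · exact absurd h (hx _)
  · exact h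

theorem Setup.out_of (S : Setup G v u) {j : Fin 5} {y : V} (h : G.Adj (u j) y) (hy : y ≠ v j) :
    out v y := by
  rintro k rfl
  have := S.out_adj (S.out_u j) h
  exact hy (by rw [S.uinj this])

theorem Setup.unon (S : Setup G v u) (i : Fin 5) : ¬ G.Adj (u i) (u (i+1)) := by
  intro h
  refine S.hC4 (u i) (v i) (v (i+1)) (u (i+1)) (S.uv _ _) (fun h => S.uv _ _ h.symm)
    ⟨(S.uadj i).symm, S.cyc i, S.uadj _, h.symm⟩

structure OutSys (G : SimpleGraph V) (v : Fin 5 → V) (B : SimpleGraph (V × V)) : Prop where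
  adj : ∀ p q, B.Adj p q → out v p.1 ∧ out v q.1 ∧ G.Adj p.1 q.1 ∧ G.Adj p.1 p.2 ∧ p.2 ≠ q.1 ∧
    G.Adj q.1 q.2 ∧ q.2 ≠ p.1
  ex : ∀ x y x', out v x → out v x' → G.Adj x y → G.Adj x x' → y ≠ x' → ∃ y', B.Adj (x, y) (x', y')
  valid : ∀ x y y', B.Reachable (x, y) (x, y') → y = y'

theorem OutSys.nb {B : SimpleGraph (V × V)} (hB : OutSys G v B) {x y : V} (hx : out v x)
    (hy : G.Adj x y) :
    (B.neighborSet (x, y)).ncard = {x' | G.Adj x x' ∧ out v x' ∧ x' ≠ y}.ncard := by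
  rw [← Set.InjOn.ncard_image (f := Prod.fst) (s := B.neighborSet (x, y))]
  · congr 1
    ext x'
    simp only [Set.mem_image, mem_neighborSet, Prod.exists, exists_and_right, exists_eq_right,
      Set.mem_ofPred_eq]
    constructor
    · rintro ⟨y', h⟩
      have := hB.adj _ _ h
      exact ⟨this.2.2.1, this.2.1, this.2.2.2.2.1.symm⟩
    · rintro ⟨h1, h2, h3⟩
      exact hB.ex _ _ _ hx h2 hy h1 h3.symm
  · rintro ⟨x1, y1⟩ h1 ⟨x2, y2⟩ h2 h
    simp only at h
    subst h
    rw [hB.valid x1 y1 y2 (h1.symm.reachable.trans h2.reachable)]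

theorem Setup.nb_term (S : Setup G v u) {B : SimpleGraph (V × V)} (hB : OutSys G v B) {j : Fin 5}
    {y : V} (hy : G.Adj (u j) y) (hyv : y ≠ v j) : (B.neighborSet (u j, y)).ncard = 1 := by
  rw [hB.nb (S.out_u j) hy, Set.ncard_eq_one]
  obtain ⟨b, c, h1, h2, h3, h4⟩ := exists_two (S.cubic (u j)) (a := v j) (S.uadj j).symm
  have h5 : ∀ x, G.Adj (u j) x ↔ x = v j ∨ x = b ∨ x = c := fun x => by
    simpa using Set.ext_iff.1 h4 x
  have hb := S.out_of ((h5 b).2 (by simp)) h2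
  have hc := S.out_of ((h5 c).2 (by simp)) h3
  have hv : ¬ out v (v j) := fun h => h j rfl
  rcases (h5 y).1 hy with h | h | h
  · exact absurd h hyv
  · refine ⟨c, ?_⟩
    ext x
    simp only [h5, Set.mem_ofPred_eq, Set.mem_singleton_iff]
    subst h
    constructor
    · rintro ⟨rfl | rfl | rfl, h, h'⟩ <;> simp_all
    · rintro rfl; simp [hc, h1.symm]
  · refine ⟨b, ?_⟩
    ext x
    simp only [h5, Set.mem_ofPred_eq, Set.mem_singleton_iff]
    subst h
    constructor
    · rintro ⟨rfl | rfl | rfl, h, h'⟩ <;> simp_all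
    · rintro rfl; simp [hb, h1]

theorem Setup.nb_other (S : Setup G v u) {B : SimpleGraph (V × V)} (hB : OutSys G v B) {x : V}
    {y : V} (hx : out v x) (hy : G.Adj x y) (hn : ∀ j, x = u j → y = v j) :
    (B.neighborSet (x, y)).ncard = 2 := by
  rw [hB.nb hx hy, Set.ncard_eq_two]
  obtain ⟨b, c, h1, h2, h3, h4⟩ := exists_two (S.cubic x) (a := y) hy
  have h5 : ∀ z, G.Adj x z ↔ z = y ∨ z = b ∨ z = c := fun z => by
    simpa using Set.ext_iff.1 h4 z
  have key : ∀ z, G.Adj x z → z ≠ y → out v z := by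
    rintro z hz hzy k rfl
    have := S.out_adj hx hz
    exact hzy (hn k this).symm
  refine ⟨b, c, h1, ?_⟩
  ext z
  simp only [Set.mem_ofPred_eq, Set.mem_insert_iff, Set.mem_singleton_iff]
  constructor
  · rintro ⟨h, -, h'⟩
    exact ((h5 z).1 h).resolve_left h'
  · intro h
    have hz : G.Adj x z := (h5 z).2 (Or.inr h)
    have : z ≠ y := by rcases h with rfl | rfl <;> assumption
    exact ⟨hz, key z hz this, this⟩

theorem OutSys.reach_mem {B : SimpleGraph (V × V)} (hB : OutSys G v B) {p q : V × V}
    (h : B.Reachable p q) (hp : out v p.1 ∧ G.Adj p.1 p.2) : out v q.1 ∧ G.Adj q.1 q.2 := by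
  obtain ⟨w⟩ := h
  induction w with
  | nil => exact hp
  | cons h _ ih =>
    have := hB.adj _ _ h
    exact ih ⟨this.2.1, this.2.2.2.2.2.1⟩

theorem Setup.pair (S : Setup G v u) [Finite V] {B : SimpleGraph (V × V)} (hB : OutSys G v B)
    {j : Fin 5} {y : V} (hy : G.Adj (u j) y) (hyv : y ≠ v j) :
    ∃ k z, G.Adj (u k) z ∧ z ≠ v k ∧ k ≠ j ∧ B.Reachable (u j, y) (u k, z) ∧
      ∀ k' z', G.Adj (u k') z' → z' ≠ v k' → B.Reachable (u j, y) (u k', z') →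
        (k' = j ∧ z' = y) ∨ (k' = k ∧ z' = z) := by
  have hmem : ∀ q, B.Reachable (u j, y) q → out v q.1 ∧ G.Adj q.1 q.2 :=
    fun q h => hB.reach_mem h ⟨S.out_u j, hy⟩
  have hcase : ∀ q, B.Reachable (u j, y) q →
      (B.neighborSet q).ncard = 2 ∨ ((B.neighborSet q).ncard = 1 ∧ ∃ k, q.1 = u k ∧ q.2 ≠ v k) := by
    rintro ⟨x, z⟩ h
    obtain ⟨h1, h2⟩ := hmem _ h
    by_cases hn : ∀ j, x = u j → z = v j
    · exact Or.inl (S.nb_other hB h1 h2 hn)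
    · push Not at hn
      obtain ⟨k, rfl, hk⟩ := hn
      exact Or.inr ⟨S.nb_term hB h2 hk, k, rfl, hk⟩
  obtain ⟨⟨x, z⟩, h1, h2, h3, h4⟩ := deg_pair B (u j, y)
    (fun q hq => by rcases hcase q hq with h | h; exact Or.inr h; exact Or.inl h.1)
    (S.nb_term hB hy hyv)
  rcases hcase _ h2 with h | ⟨-, k, rfl : x = u k, hk⟩
  · omega
  · refine ⟨k, z, (hmem _ h2).2, hk, ?_, h2, ?_⟩
    · rintro rfl
      exact h1 (by rw [hB.valid _ _ _ h2])
    · intro k' z' h5 h6 h7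
      rcases h4 _ h7 (S.nb_term hB h5 h6) with h | h
      · rw [Prod.mk.injEq] at h; exact Or.inl ⟨S.uinj h.1, h.2⟩
      · rw [Prod.mk.injEq] at h; exact Or.inr ⟨S.uinj h.1, h.2⟩
end

section
variable {V : Type*} {G : SimpleGraph V} {v u : Fin 5 → V}

def tc (u : Fin 5 → V) (a : Fin 5 → Bool → V) (n : ℕ) : V × V :=
  (u (Fin.ofNat 5 (n / 2)), a (Fin.ofNat 5 (n / 2)) (n % 2 == 1))

theorem tc_cd (a : Fin 5 → Bool → V) (j : Fin 5) (s : Bool) : tc u a (cd j s) = (u j, a j s) := by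
  have h1 : ∀ (j : Fin 5) (s : Bool), Fin.ofNat 5 (cd j s / 2) = j ∧ (cd j s % 2 == 1) = s := by
    decide
  unfold tc
  rw [(h1 j s).1, (h1 j s).2]

theorem cd_lt (j : Fin 5) (s : Bool) : cd j s < 10 := by
  revert j s; decide

theorem eq_cd {t : ℕ} (ht : t < 10) : t = cd (Fin.ofNat 5 (t / 2)) (t % 2 == 1) := by
  revert ht; revert t; decide

theorem cd_inj {j k : Fin 5} {s t : Bool} (h : cd j s = cd k t) : j = k ∧ s = t := by
  revert j k s t; decide

structure Lab (G : SimpleGraph V) (v u : Fin 5 → V) (B : SimpleGraph (V × V))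
    (a : Fin 5 → Bool → V) (P : ℕ) : Prop where
  ne : ∀ j, a j false ≠ a j true
  nb : ∀ j x, G.Adj (u j) x ↔ x = v j ∨ ∃ s, x = a j s
  nv : ∀ j s, a j s ≠ v j
  mem : P ∈ types
  re : ∀ n < 10, B.Reachable (tc u a n) (tc u a (dg P n))
  un : ∀ n < 10, ∀ m < 10, B.Reachable (tc u a n) (tc u a m) → m = n ∨ m = dg P n

theorem Setup.label (S : Setup G v u) [Finite V] {B : SimpleGraph (V × V)} (hB : OutSys G v B) :
    ∃ a P, Lab G v u B a P := by
  have h0 : ∀ j, ∃ b c, b ≠ c ∧ b ≠ v j ∧ c ≠ v j ∧ G.neighborSet (u j) = {v j, b, c} :=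
    fun j => exists_two (S.cubic (u j)) (S.uadj j).symm
  choose b c hbc hb hc hN using h0
  let a0 : Fin 5 → Bool → V := fun j s => if s then c j else b j
  have a0ne : ∀ j s t, a0 j s = a0 j t → s = t := by
    intro j s t
    cases s <;> cases t <;> simp [a0, hbc, (hbc _).symm]
  have a0nv : ∀ j s, a0 j s ≠ v j := by
    intro j s
    cases s <;> simp [a0, hb, hc]
  have a0nb : ∀ j x, G.Adj (u j) x ↔ x = v j ∨ ∃ s, x = a0 j s := by
    intro j x
    have := Set.ext_iff.1 (hN j) x
    simp only [mem_neighborSet, Set.mem_insert_iff, Set.mem_singleton_iff] at this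
    simp [this, a0]
  have h1 : ∀ n, ∃ m, n < 10 → m < 10 ∧ m / 2 ≠ n / 2 ∧ B.Reachable (tc u a0 n) (tc u a0 m) ∧
      ∀ m' < 10, B.Reachable (tc u a0 n) (tc u a0 m') → m' = n ∨ m' = m := by
    intro n
    by_cases hn : n < 10
    swap
    · exact ⟨0, fun h => absurd h hn⟩
    rw [eq_cd hn]
    generalize Fin.ofNat 5 (n / 2) = j
    generalize (n % 2 == 1) = s
    obtain ⟨k, z, h1, h2, h3, h4, h5⟩ := S.pair hB ((a0nb j (a0 j s)).2 (Or.inr ⟨s, rfl⟩)) (a0nv j s)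
    obtain ⟨t, rfl⟩ := ((a0nb k z).1 h1).resolve_left h2
    refine ⟨cd k t, fun _ => ⟨cd_lt _ _, ?_, ?_, ?_⟩⟩
    · intro h
      apply h3
      clear * - h
      revert h; revert j k s t; decide
    · rw [tc_cd, tc_cd]; exact h4
    · intro m' hm'
      rw [eq_cd hm']
      generalize Fin.ofNat 5 (m' / 2) = j'
      generalize (m' % 2 == 1) = s'
      rw [tc_cd, tc_cd]
      intro h
      rcases h5 j' _ ((a0nb _ _).2 (Or.inr ⟨s', rfl⟩)) (a0nv _ _) h with ⟨rfl, h⟩ | ⟨rfl, h⟩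
      · rw [a0ne _ _ _ h]; exact Or.inl rfl
      · rw [a0ne _ _ _ h]; exact Or.inr rfl
  choose f hf using h1
  obtain ⟨P, hP, m, hm⟩ := classify f (fun t ht => (hf t ht).1) (by
    intro t ht
    have h := (hf (f t) (hf t ht).1).2.2.2 t ht (hf t ht).2.2.1.symm
    rcases h with h | h
    · exact absurd (by rw [← h]) (hf t ht).2.1
    · exact h.symm) (fun t ht => (hf t ht).2.1)
  let a : Fin 5 → Bool → V := fun j s => a0 j ((s.toNat + m j.val) % 2 == 1)
  have rlt : ∀ n < 10, rel m n < 10 := by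
    intro n hn; unfold rel; omega
  have ta : ∀ n < 10, tc u a n = tc u a0 (rel m n) := by
    intro n hn
    have e1 : rel m n / 2 = n / 2 := by unfold rel; omega
    have e2 : rel m n % 2 = (n % 2 + m (n / 2)) % 2 := by unfold rel; omega
    have e3 : (Fin.ofNat 5 (n / 2)).val = n / 2 := by simp; omega
    have e4 : (n % 2 == 1).toNat = n % 2 := by
      rcases Nat.mod_two_eq_zero_or_one n with h | h <;> simp [h]
    simp only [tc, a, e1, e2, e3, e4]
  refine ⟨a, P, ?_, ?_, ?_, hP, ?_, ?_⟩
  · intro j h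
    have := a0ne _ _ _ h
    revert this
    rcases Nat.mod_two_eq_zero_or_one (m j.val) with h | h <;> simp [h, Nat.add_mod]
  · intro j x
    rw [a0nb]
    refine or_congr Iff.rfl ⟨?_, ?_⟩
    · rintro ⟨s, rfl⟩
      rcases Nat.mod_two_eq_zero_or_one (m j.val) with h | h
      · exact ⟨s, by cases s <;> simp [a, h, Nat.add_mod]⟩
      · exact ⟨!s, by cases s <;> simp [a, h, Nat.add_mod]⟩
    · rintro ⟨s, rfl⟩
      exact ⟨_, rfl⟩
  · intro j s
    exact a0nv _ _
  · intro n hn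
    rw [ta n hn, ta _ (dg_lt P hP n hn), ← hm n hn]
    exact (hf _ (rlt n hn)).2.2.1
  · intro n hn k hk h
    rw [ta n hn, ta k hk] at h
    have h' := (hf _ (rlt n hn)).2.2.2 _ (rlt k hk) h
    rw [hm n hn] at h'
    have inj : ∀ x y, rel m x = rel m y → x = y := by
      intro x y h
      unfold rel at h
      have e : x / 2 = y / 2 := by omega
      rw [e] at h
      omega
    exact h'.imp (inj _ _) (inj _ _)
end

section
variable {V : Type*} {G : SimpleGraph V} {v u : Fin 5 → V}

def mis (v u : Fin 5 → V) (j : Fin 5) (k : Fin 3) : V := ![v (j + 4), v (j + 1), u j] k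

def NN (c g : ℕ) (j : Fin 5) (k : Fin 3) : ℕ := ![N0 c g j, N1 c g j, N2 c j] k

inductive Lk (v u : Fin 5 → V) (a : Fin 5 → Bool → V) (g : ℕ) : V × V → V × V → Prop
  | cut (j : Fin 5) (s : Bool) :
    Lk v u a g (u j, a j s) (v j, mis v u j (if s = g.testBit (5 + j.val) then 0 else 1))
  | pent (k : Fin 5) (t : Bool) :
    Lk v u a g (v k, mis v u k (if t then 0 else 2))
      (v (k + 1), mis v u (k + 1) (if (t ^^ g.testBit k.val) then 1 else 2))

def MG (v u : Fin 5 → V) (B : SimpleGraph (V × V)) (a : Fin 5 → Bool → V) (g : ℕ) :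
    SimpleGraph (V × V) := B ⊔ SimpleGraph.fromRel (Lk v u a g)

theorem Setup.mis_inj (S : Setup G v u) {j : Fin 5} {k k' : Fin 3} (h : mis v u j k = mis v u j k') :
    k = k' := by
  have hne : v (j+4) ≠ v (j+1) := by
    intro h
    have := S.vinj h
    clear * - this
    revert this; revert j; decide
  have h1 := S.uv
  have h2 : ∀ i j, v j ≠ u i := fun i j h => h1 _ _ h.symm
  fin_cases k <;> fin_cases k' <;> simp [mis, hne, hne.symm, h1, h2] at h ⊢

theorem Setup.mis_adj (S : Setup G v u) (j : Fin 5) (x : V) :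
    G.Adj (v j) x ↔ ∃ k, x = mis v u j k := by
  rw [S.vnbr]
  simp [mis, Fin.exists_fin_succ]
  tauto

theorem Lk.fst_ne (S : Setup G v u) {a : Fin 5 → Bool → V} {g : ℕ} {p q : V × V}
    (h : Lk v u a g p q) : p ≠ q := by
  cases h with
  | cut j s => intro h; exact S.uv _ _ (Prod.mk.inj h).1
  | pent k t => intro h; exact (S.cyc k).ne (Prod.mk.inj h).1

theorem Lk.adj (S : Setup G v u) {B : SimpleGraph (V × V)} {a : Fin 5 → Bool → V} {P g : ℕ}
    (L : Lab G v u B a P) {p q : V × V} (h : Lk v u a g p q) :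
    G.Adj p.1 q.1 ∧ G.Adj p.1 p.2 ∧ p.2 ≠ q.1 ∧ G.Adj q.1 q.2 ∧ q.2 ≠ p.1 := by
  cases h with
  | cut j s =>
    refine ⟨(S.uadj j).symm, (L.nb _ _).2 (Or.inr ⟨s, rfl⟩), L.nv _ _, (S.mis_adj _ _).2 ⟨_, rfl⟩, ?_⟩
    change _ ≠ mis v u j 2
    intro h
    dsimp only at h
    have := S.mis_inj h
    split_ifs at this <;> simp at this
  | pent k t =>
    refine ⟨S.cyc k, (S.mis_adj _ _).2 ⟨_, rfl⟩, ?_, (S.mis_adj _ _).2 ⟨_, rfl⟩, ?_⟩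
    · change _ ≠ mis v u k 1
      intro h
      dsimp only at h
      have := S.mis_inj h
      split_ifs at this <;> simp at this
    · have e : v k = mis v u (k + 1) 0 := by
        simp only [mis]
        have : k + 1 + 4 = k := by clear * -; revert k; decide
        simp [this]
      change _ ≠ v k
      rw [e]
      intro h
      dsimp only at h
      have := S.mis_inj h
      split_ifs at this <;> simp at this

theorem MG_lk (S : Setup G v u) {B : SimpleGraph (V × V)} {a : Fin 5 → Bool → V} {g : ℕ}
    {p q : V × V} (h : Lk v u a g p q) : (MG v u B a g).Adj p q := by
  right
  rw [fromRel_adj]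
  exact ⟨h.fst_ne S, Or.inl h⟩

theorem MG_ex (S : Setup G v u) {B : SimpleGraph (V × V)} (hB : OutSys G v B)
    {a : Fin 5 → Bool → V} {P g : ℕ} (L : Lab G v u B a P) (x y x' : V) (h1 : G.Adj x y)
    (h2 : G.Adj x x') (h3 : y ≠ x') : ∃ c, (MG v u B a g).Adj (x, y) (x', c) := by
  by_cases hx : out v x
  · by_cases hx' : out v x'
    · obtain ⟨c, hc⟩ := hB.ex x y x' hx hx' h1 h2 h3
      exact ⟨c, Or.inl hc⟩
    · simp only [out, not_forall, not_not] at hx'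
      obtain ⟨j, rfl⟩ := hx'
      have := S.out_adj hx h2
      subst this
      obtain ⟨s, rfl⟩ := ((L.nb _ _).1 h1).resolve_left h3
      exact ⟨_, MG_lk S (.cut j s)⟩
  · simp only [out, not_forall, not_not] at hx
    obtain ⟨j, rfl⟩ := hx
    obtain ⟨k, rfl⟩ := (S.mis_adj _ _).1 h1
    obtain ⟨k', rfl⟩ := (S.mis_adj _ _).1 h2
    have hk : k ≠ k' := fun h => h3 (by rw [h])
    have e0 : mis v u j 0 = v (j + 4) := rfl
    have e1 : mis v u j 1 = v (j + 1) := rfl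
    have e2 : mis v u j 2 = u j := rfl
    have hk' : k' = 0 ∨ k' = 1 ∨ k' = 2 := by clear * -; revert k'; decide
    rcases hk' with rfl | rfl | rfl
    · have e : j + 4 + 1 = j := by clear * -; revert j; decide
      have hk1 : k = 1 ∨ k = 2 := by clear * - hk; revert k; decide
      rw [e0]
      rcases hk1 with rfl | rfl
      · have := (MG_lk (B := B) (a := a) (g := g) S (.pent (j + 4) (!g.testBit (j+4).val))).symm
        rw [e] at this
        exact ⟨_, by simpa using this⟩
      · have := (MG_lk (B := B) (a := a) (g := g) S (.pent (j + 4) (g.testBit (j+4).val))).symm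
        rw [e] at this
        exact ⟨_, by simpa using this⟩
    · have hk1 : k = 0 ∨ k = 2 := by clear * - hk; revert k; decide
      rw [e1]
      rcases hk1 with rfl | rfl
      · exact ⟨_, MG_lk (B := B) (a := a) (g := g) S (.pent j true)⟩
      · exact ⟨_, MG_lk (B := B) (a := a) (g := g) S (.pent j false)⟩
    · have hk1 : k = 0 ∨ k = 1 := by clear * - hk; revert k; decide
      rw [e2]
      rcases hk1 with rfl | rfl
      · have := (MG_lk (B := B) (a := a) (g := g) S (.cut j (g.testBit (5 + j.val)))).symm
        exact ⟨_, by simpa using this⟩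
      · have := (MG_lk (B := B) (a := a) (g := g) S (.cut j (!g.testBit (5 + j.val)))).symm
        exact ⟨_, by simpa using this⟩

def Cl (v u : Fin 5 → V) (B : SimpleGraph (V × V)) (a : Fin 5 → Bool → V) (c g : ℕ) (p : V × V)
    (κ : ℕ) : Prop :=
  (∃ j k, p = (v j, mis v u j k) ∧ κ = NN c g j k) ∨
  (∃ t < 10, B.Reachable (tc u a t) p ∧ κ = dg c t)

theorem reach_out (S : Setup G v u) {B : SimpleGraph (V × V)} (hB : OutSys G v B)
    {a : Fin 5 → Bool → V} {P : ℕ} (L : Lab G v u B a P) {t : ℕ} {p : V × V}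
    (h : B.Reachable (tc u a t) p) : out v p.1 :=
  (hB.reach_mem h ⟨S.out_u _, (L.nb _ _).2 (Or.inr ⟨_, rfl⟩)⟩).1

theorem Cl_uniq (S : Setup G v u) {B : SimpleGraph (V × V)} (hB : OutSys G v B)
    {a : Fin 5 → Bool → V} {P g c : ℕ} (L : Lab G v u B a P) (hc : GoodCol P g c) {p : V × V}
    {κ κ' : ℕ} (h : Cl v u B a c g p κ) (h' : Cl v u B a c g p κ') : κ = κ' := by
  rcases h with ⟨j, k, rfl, rfl⟩ | ⟨t, ht, hr, rfl⟩
  · rcases h' with ⟨j', k', he, rfl⟩ | ⟨t, ht, hr, rfl⟩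
    · rw [Prod.mk.injEq] at he
      have := S.vinj he.1
      subst this
      rw [S.mis_inj he.2]
    · exact absurd rfl (reach_out S hB L hr j)
  · rcases h' with ⟨j, k, rfl, rfl⟩ | ⟨t', ht', hr', rfl⟩
    · exact absurd rfl (reach_out S hB L hr j)
    · rcases L.un t ht t' ht' (hr.trans hr'.symm) with rfl | rfl
      · rfl
      · exact (hc.1 t ht).symm

theorem Cl_sep (S : Setup G v u) {B : SimpleGraph (V × V)} (hB : OutSys G v B)
    {a : Fin 5 → Bool → V} {P g c : ℕ} (L : Lab G v u B a P) (hc : GoodCol P g c)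
    (hCF : ∀ t < 10, ∀ t' < 10, dg c t = dg c t' → ∀ x y y', B.Reachable (tc u a t) (x, y) →
      B.Reachable (tc u a t') (x, y') → y = y') {x y y' : V}
    {κ : ℕ} (h : Cl v u B a c g (x, y) κ) (h' : Cl v u B a c g (x, y') κ) : y = y' := by
  rcases h with ⟨j, k, he, rfl⟩ | ⟨t, ht, hr, rfl⟩
  · rw [Prod.mk.injEq] at he
    obtain ⟨rfl, rfl⟩ := he
    rcases h' with ⟨j', k', he, h⟩ | ⟨t, ht, hr, h⟩
    · rw [Prod.mk.injEq] at he
      obtain ⟨he, rfl⟩ := he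
      have := S.vinj he
      subst this
      obtain ⟨h1, h2, h3⟩ := hc.2.2 j
      have : k = k' := by
        clear * - h h1 h2 h3
        fin_cases k <;> fin_cases k' <;> simp [NN] at h ⊢ <;> omega
      rw [this]
    · exact absurd rfl (reach_out S hB L hr j)
  · rcases h' with ⟨j, k, he, h⟩ | ⟨t', ht', hr', h⟩
    · rw [Prod.mk.injEq] at he
      exact absurd he.1 (reach_out S hB L hr j)
    · exact hCF t ht t' ht' h x y y' hr hr'

theorem Cl_lk {B : SimpleGraph (V × V)} {a : Fin 5 → Bool → V} {P g c : ℕ}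
    (hc : GoodCol P g c) {p q : V × V} (h : Lk v u a g p q) :
    ∃ κ, Cl v u B a c g p κ ∧ Cl v u B a c g q κ := by
  cases h with
  | cut j s =>
    refine ⟨dg c (cd j s), Or.inr ⟨cd j s, cd_lt _ _, ?_, rfl⟩, Or.inl ⟨j, _, rfl, ?_⟩⟩
    · rw [tc_cd]
    · by_cases hs : s = g.testBit (5 + j.val)
      · simp [NN, N0, hs]
      · have : s = !g.testBit (5 + j.val) := by
          revert hs; cases s <;> cases g.testBit (5 + j.val) <;> simp
        simp [NN, N1, this]
  | pent k t =>
    refine ⟨_, Or.inl ⟨k, _, rfl, rfl⟩, Or.inl ⟨k + 1, _, rfl, ?_⟩⟩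
    obtain ⟨h1, h2⟩ := hc.2.1 k
    cases t <;> cases hg : g.testBit k.val <;> simp [hg] at h1 h2 <;> simp [NN, h1, h2]

theorem Cl_adj (S : Setup G v u) {B : SimpleGraph (V × V)} (hB : OutSys G v B)
    {a : Fin 5 → Bool → V} {P g c : ℕ} (L : Lab G v u B a P) (hc : GoodCol P g c) {p q : V × V}
    {κ : ℕ} (h : Cl v u B a c g p κ) (ha : (MG v u B a g).Adj p q) : Cl v u B a c g q κ := by
  rcases ha with ha | ha
  · rcases h with ⟨j, k, rfl, rfl⟩ | ⟨t, ht, hr, rfl⟩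
    · exact absurd rfl ((hB.adj _ _ ha).1 j)
    · exact Or.inr ⟨t, ht, hr.trans ha.reachable, rfl⟩
  · rw [fromRel_adj] at ha
    rcases ha.2 with ha | ha
    · obtain ⟨κ', h1, h2⟩ := Cl_lk (B := B) hc ha
      rw [Cl_uniq S hB L hc h h1]; exact h2
    · obtain ⟨κ', h1, h2⟩ := Cl_lk (B := B) hc ha
      rw [Cl_uniq S hB L hc h h2]; exact h1

theorem MG_sys (S : Setup G v u) {B : SimpleGraph (V × V)} (hB : OutSys G v B)
    {a : Fin 5 → Bool → V} {P g c : ℕ} (L : Lab G v u B a P) (hc : GoodCol P g c)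
    (hCF : ∀ t < 10, ∀ t' < 10, dg c t = dg c t' → ∀ x y y', B.Reachable (tc u a t) (x, y) →
      B.Reachable (tc u a t') (x, y') → y = y') : IsSys G (MG v u B a g) := by
  refine ⟨?_, MG_ex S hB L, ?_⟩
  · intro p q h
    rcases h with h | h
    · exact (hB.adj p q h).2.2
    · rw [fromRel_adj] at h
      rcases h.2 with h | h
      · exact h.adj S L
      · obtain ⟨h1, h2, h3, h4, h5⟩ := h.adj S L
        exact ⟨h1.symm, h4, h5, h2, h3⟩
  · intro x y y' h
    have key : ∀ p q, (MG v u B a g).Reachable p q →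
        (∃ κ, Cl v u B a c g p κ ∧ Cl v u B a c g q κ) ∨ B.Reachable p q := by
      rintro p q ⟨w⟩
      induction w with
      | nil => exact Or.inr (Reachable.refl _)
      | @cons p r q ha _ ih =>
        rcases ih with ⟨κ, h1, h2⟩ | hr
        · exact Or.inl ⟨κ, Cl_adj S hB L hc h1 ha.symm, h2⟩
        · by_cases hp : ∃ κ, Cl v u B a c g p κ
          · obtain ⟨κ, hp⟩ := hp
            refine Or.inl ⟨κ, hp, ?_⟩
            have h1 := Cl_adj S hB L hc hp ha
            obtain ⟨w⟩ := hr
            clear * - h1 w S hB L hc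
            induction w with
            | nil => exact h1
            | cons h _ ih => exact ih (Cl_adj S hB L hc h1 (Or.inl h))
          · right
            rcases ha with ha | ha
            · exact ha.reachable.trans hr
            · rw [fromRel_adj] at ha
              rcases ha.2 with ha | ha
              · obtain ⟨κ', h1, h2⟩ := Cl_lk (B := B) hc ha
                exact absurd ⟨_, h1⟩ hp
              · obtain ⟨κ', h1, h2⟩ := Cl_lk (B := B) hc ha
                exact absurd ⟨_, h2⟩ hp
    rcases key _ _ h with ⟨κ, h1, h2⟩ | h
    · exact Cl_sep S hB L hc hCF h1 h2
    · exact hB.valid _ _ _ h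

theorem MG_out {B : SimpleGraph (V × V)} (hB : OutSys G v B)
    {a : Fin 5 → Bool → V} {g : ℕ} (p q : V × V) :
    B.Adj p q ↔ (MG v u B a g).Adj p q ∧ out v p.1 ∧ out v q.1 := by
  constructor
  · intro h
    exact ⟨Or.inl h, (hB.adj _ _ h).1, (hB.adj _ _ h).2.1⟩
  · rintro ⟨h | h, h1, h2⟩
    · exact h
    · rw [fromRel_adj] at h
      rcases h.2 with h | h
      · cases h with
        | cut j s => exact absurd rfl (h2 j)
        | pent k t => exact absurd rfl (h1 k)
      · cases h with
        | cut j s => exact absurd rfl (h1 j)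
        | pent k t => exact absurd rfl (h2 k)

theorem MG_inj (S : Setup G v u) {B : SimpleGraph (V × V)}
    {a : Fin 5 → Bool → V} {g g' : ℕ} (hg : g < 1024) (hg' : g' < 1024)
    (hM : IsSys G (MG v u B a g)) (h : MG v u B a g = MG v u B a g') : g = g' := by
  have hv := hM.valid
  apply Nat.eq_of_testBit_eq
  intro n
  by_cases h5 : n < 5
  · have h1 := MG_lk (B := B) (a := a) (g := g) S (.pent ⟨n, h5⟩ true)
    have h2 := MG_lk (B := B) (a := a) (g := g') S (.pent ⟨n, h5⟩ true)
    rw [← h] at h2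
    have := S.mis_inj (hv _ _ _ (h1.symm.reachable.trans h2.reachable))
    revert this
    cases g.testBit n <;> cases g'.testBit n <;> simp
  by_cases h10 : n < 10
  · have h1 := MG_lk (B := B) (a := a) (g := g) S (.cut ⟨n - 5, by omega⟩ true)
    have h2 := MG_lk (B := B) (a := a) (g := g') S (.cut ⟨n - 5, by omega⟩ true)
    rw [← h] at h2
    have := S.mis_inj (hv _ _ _ (h1.symm.reachable.trans h2.reachable))
    simp only [show 5 + (n - 5) = n by omega] at this
    revert this
    cases g.testBit n <;> cases g'.testBit n <;> simp
  · have : 1024 ≤ 2 ^ n := by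
      calc 1024 = 2 ^ 10 := by norm_num
        _ ≤ 2 ^ n := Nat.pow_le_pow_right (by norm_num) (by omega)
    rw [Nat.testBit_lt_two_pow (by omega), Nat.testBit_lt_two_pow (by omega)]
end

section
variable {V : Type*} {G : SimpleGraph V} {v u : Fin 5 → V}

/-- The vertex type of the reduced graphs. -/
abbrev WT (v : Fin 5 → V) := {x : V // ∀ j : Fin 5, x ≠ v j} ⊕ Unit

/-- `H` is the `i`-th reduced graph. -/
def Rd (G : SimpleGraph V) (v u : Fin 5 → V) (i : Fin 5) (H : SimpleGraph (WT v)) : Prop :=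
  ∀ p q, H.Adj p q ↔
      (∃ x y, p = Sum.inl x ∧ q = Sum.inl y ∧
        (G.Adj x.1 y.1 ∨ (x.1 = u i ∧ y.1 = u (i + 1)) ∨ (x.1 = u (i + 1) ∧ y.1 = u i))) ∨
      (∃ x, p = Sum.inl x ∧ q = Sum.inr () ∧
        (x.1 = u (i + 2) ∨ x.1 = u (i + 3) ∨ x.1 = u (i + 4))) ∨
      (∃ x, p = Sum.inr () ∧ q = Sum.inl x ∧
        (x.1 = u (i + 2) ∨ x.1 = u (i + 3) ∨ x.1 = u (i + 4)))

open scoped Classical in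
noncomputable def em (v : Fin 5 → V) (x : V) : WT v :=
  if h : ∀ j, x ≠ v j then Sum.inl ⟨x, h⟩ else Sum.inr ()

open scoped Classical in
noncomputable def nbr (v u : Fin 5 → V) (i : Fin 5) (x y : V) : WT v :=
  if out v y then em v y else if x = u i then em v (u (i + 1)) else
    if x = u (i + 1) then em v (u i) else Sum.inr ()

noncomputable def th (v u : Fin 5 → V) (i : Fin 5) (p : V × V) : WT v × WT v :=
  (em v p.1, nbr v u i p.1 p.2)

theorem em_out {x : V} (h : out v x) : em v x = Sum.inl ⟨x, h⟩ := dif_pos h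

theorem em_inj {x y : V} (hx : out v x) (hy : out v y) (h : em v x = em v y) : x = y := by
  rw [em_out hx, em_out hy] at h
  exact congrArg Subtype.val (Sum.inl.inj h)

theorem em_ne {x : V} (hx : out v x) : em v x ≠ Sum.inr () := by
  rw [em_out hx]; simp

theorem em_cases (p : WT v) : p = Sum.inr () ∨ ∃ x, out v x ∧ p = em v x := by
  rcases p with x | x
  · exact Or.inr ⟨x.1, x.2, (em_out x.2).symm⟩
  · exact Or.inl rfl

variable {i : Fin 5} {H : SimpleGraph (WT v)}

theorem Rd.ee (R : Rd G v u i H) {x y : V} (hx : out v x) (hy : out v y) :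
    H.Adj (em v x) (em v y) ↔
      G.Adj x y ∨ (x = u i ∧ y = u (i + 1)) ∨ (x = u (i + 1) ∧ y = u i) := by
  rw [em_out hx, em_out hy, R]
  constructor
  · rintro (⟨x', y', h1, h2, h⟩ | ⟨x', h1, h2, h⟩ | ⟨x', h1, h2, h⟩)
    · simp only [Sum.inl.injEq] at h1 h2
      rw [← h1, ← h2] at h
      exact h
    · simp at h2
    · simp at h1
  · intro h
    exact Or.inl ⟨_, _, rfl, rfl, h⟩

theorem Rd.er (R : Rd G v u i H) {x : V} (hx : out v x) :
    H.Adj (em v x) (Sum.inr ()) ↔ x = u (i + 2) ∨ x = u (i + 3) ∨ x = u (i + 4) := by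
  rw [em_out hx, R]
  constructor
  · rintro (⟨x', y', h1, h2, h⟩ | ⟨x', h1, h2, h⟩ | ⟨x', h1, h2, h⟩)
    · simp at h2
    · simp only [Sum.inl.injEq] at h1
      rw [← h1] at h
      exact h
    · simp at h1
  · intro h
    exact Or.inr (Or.inl ⟨_, rfl, rfl, h⟩)

theorem Rd.rr (_R : Rd G v u i H) : ¬ H.Adj (Sum.inr ()) (Sum.inr ()) := fun h => h.ne rfl

theorem nbr_out {x y : V} (hy : out v y) : nbr v u i x y = em v y := if_pos hy

theorem not_out (j : Fin 5) : ¬ out v (v j) := fun h => h j rfl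

theorem nbr_i : nbr v u i (u i) (v i) = em v (u (i + 1)) := by
  simp [nbr, not_out]

theorem succ_ne (i : Fin 5) : i + 1 ≠ i := by revert i; decide

theorem Setup.une (S : Setup G v u) {j k : Fin 5} (h : j ≠ k) : u j ≠ u k := fun e => h (S.uinj e)

theorem Setup.nbr_i1 (S : Setup G v u) : nbr v u i (u (i + 1)) (v (i + 1)) = em v (u i) := by
  have := S.une (succ_ne i)
  simp [nbr, not_out, this]

theorem Setup.nbr_w (S : Setup G v u) {j : Fin 5} (h1 : j ≠ i) (h2 : j ≠ i + 1) :
    nbr v u i (u j) (v j) = Sum.inr () := by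
  simp [nbr, not_out, S.une h1, S.une h2]

theorem five (i j : Fin 5) : j = i ∨ j = i + 1 ∨ j = i + 2 ∨ j = i + 3 ∨ j = i + 4 := by
  revert i j; decide

theorem ne1 (i : Fin 5) : i + 2 ≠ i ∧ i + 3 ≠ i ∧ i + 4 ≠ i ∧ i + 2 ≠ i + 1 ∧ i + 3 ≠ i + 1 ∧
    i + 4 ≠ i + 1 ∧ i + 2 ≠ i + 3 ∧ i + 2 ≠ i + 4 ∧ i + 3 ≠ i + 4 := by
  revert i; decide

/-- the six kinds of neighbours -/
theorem Setup.nbr_adj (S : Setup G v u) (R : Rd G v u i H) {x y : V} (hx : out v x)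
    (h : G.Adj x y) : H.Adj (em v x) (nbr v u i x y) := by
  by_cases hy : out v y
  · rw [nbr_out hy, R.ee hx hy]; exact Or.inl h
  · simp only [out, not_forall, not_not] at hy
    obtain ⟨j, rfl⟩ := hy
    have := S.out_adj hx h
    subst this
    obtain ⟨n1, n2, n3, n4, n5, n6, -⟩ := ne1 i
    rcases five i j with rfl | rfl | rfl | rfl | rfl
    · rw [nbr_i, R.ee hx (S.out_u _)]; simp
    · rw [S.nbr_i1, R.ee hx (S.out_u _)]; simp
    · rw [S.nbr_w n1 n4, R.er hx]; simp
    · rw [S.nbr_w n2 n5, R.er hx]; simp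
    · rw [S.nbr_w n3 n6, R.er hx]; simp

theorem Setup.nbr_surj (S : Setup G v u) (R : Rd G v u i H) {x : V} {z : WT v} (hx : out v x)
    (h : H.Adj (em v x) z) : ∃ y, G.Adj x y ∧ nbr v u i x y = z := by
  rcases em_cases z with rfl | ⟨y, hy, rfl⟩
  · rw [R.er hx] at h
    obtain ⟨n1, n2, n3, n4, n5, n6, -⟩ := ne1 i
    rcases h with rfl | rfl | rfl
    · exact ⟨_, (S.uadj _).symm, S.nbr_w n1 n4⟩
    · exact ⟨_, (S.uadj _).symm, S.nbr_w n2 n5⟩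
    · exact ⟨_, (S.uadj _).symm, S.nbr_w n3 n6⟩
  · rw [R.ee hx hy] at h
    rcases h with h | ⟨rfl, rfl⟩ | ⟨rfl, rfl⟩
    · exact ⟨y, h, nbr_out hy⟩
    · exact ⟨_, (S.uadj _).symm, nbr_i⟩
    · exact ⟨_, (S.uadj _).symm, S.nbr_i1⟩

theorem Setup.nbr_ne (S : Setup G v u) {j : Fin 5} {y : V}
    (hy : out v y) (h' : G.Adj (u j) y) : nbr v u i (u j) (v j) ≠ em v y := by
  intro e
  obtain ⟨n1, n2, n3, n4, n5, n6, -⟩ := ne1 i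
  rcases five i j with rfl | rfl | rfl | rfl | rfl
  · rw [nbr_i] at e
    rw [← em_inj (S.out_u _) hy e] at h'
    exact S.unon _ h'
  · rw [S.nbr_i1] at e
    rw [← em_inj (S.out_u _) hy e] at h'
    exact S.unon _ h'.symm
  · rw [S.nbr_w n1 n4] at e; exact em_ne hy e.symm
  · rw [S.nbr_w n2 n5] at e; exact em_ne hy e.symm
  · rw [S.nbr_w n3 n6] at e; exact em_ne hy e.symm

theorem Setup.nbr_inj (S : Setup G v u) {x y y' : V} (hx : out v x)
    (h : G.Adj x y) (h' : G.Adj x y') (e : nbr v u i x y = nbr v u i x y') : y = y' := by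
  by_cases hy : out v y
  · by_cases hy' : out v y'
    · rw [nbr_out hy, nbr_out hy'] at e
      exact em_inj hy hy' e
    · simp only [out, not_forall, not_not] at hy'
      obtain ⟨j, rfl⟩ := hy'
      have := S.out_adj hx h'
      subst this
      rw [nbr_out hy] at e
      exact absurd e.symm (S.nbr_ne hy h)
  · simp only [out, not_forall, not_not] at hy
    obtain ⟨j, rfl⟩ := hy
    have := S.out_adj hx h
    subst this
    by_cases hy' : out v y'
    · rw [nbr_out hy'] at e
      exact absurd e (S.nbr_ne hy' h')
    · simp only [out, not_forall, not_not] at hy'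
      obtain ⟨k, rfl⟩ := hy'
      rw [S.uinj (S.out_adj hx h')]

theorem Setup.cubic' (S : Setup G v u) (R : Rd G v u i H) : IsCubic H := by
  intro p
  rcases em_cases p with rfl | ⟨x, hx, rfl⟩
  · obtain ⟨-, -, -, -, -, -, n1, n2, n3⟩ := ne1 i
    have : H.neighborSet (Sum.inr ()) = {em v (u (i+2)), em v (u (i+3)), em v (u (i+4))} := by
      ext z
      rw [mem_neighborSet, H.adj_comm]
      rcases em_cases z with rfl | ⟨y, hy, rfl⟩
      · simp only [Set.mem_insert_iff, Set.mem_singleton_iff]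
        have hn := fun j => (em_ne (S.out_u j)).symm
        simp [hn]
      · rw [R.er hy]
        have hn : ∀ j, em v y = em v (u j) ↔ y = u j :=
          fun j => ⟨em_inj hy (S.out_u j), fun h => by rw [h]⟩
        simp [hn]
    rw [this]
    have hn : ∀ j k, j ≠ k → em v (u j) ≠ em v (u k) :=
      fun j k h e => S.une h (em_inj (S.out_u j) (S.out_u k) e)
    rw [Set.ncard_eq_three]
    exact ⟨_, _, _, hn _ _ n1, hn _ _ n2, hn _ _ n3, rfl⟩
  · rw [← S.cubic x, ← Set.InjOn.ncard_image (f := nbr v u i x) (s := G.neighborSet x)]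
    · congr 1
      ext z
      simp only [mem_neighborSet, Set.mem_image]
      constructor
      · exact fun h => S.nbr_surj R hx h
      · rintro ⟨y, hy, rfl⟩
        exact S.nbr_adj R hx hy
    · intro y hy y' hy' e
      exact S.nbr_inj hx hy hy' e

/-- the outer part of a system of a reduced graph -/
def oB (G : SimpleGraph V) (v u : Fin 5 → V) (i : Fin 5) (M : SimpleGraph (WT v × WT v)) :
    SimpleGraph (V × V) where
  Adj p q := out v p.1 ∧ out v q.1 ∧ G.Adj p.1 q.1 ∧ G.Adj p.1 p.2 ∧ G.Adj q.1 q.2 ∧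
    M.Adj (th v u i p) (th v u i q)
  symm := ⟨by
    rintro p q ⟨h1, h2, h3, h4, h5, h6⟩
    exact ⟨h2, h1, h3.symm, h5, h4, h6.symm⟩⟩
  loopless := ⟨fun p h => h.2.2.1.ne rfl⟩

variable {M : SimpleGraph (WT v × WT v)}

theorem oB_reach {p q : V × V} (h : (oB G v u i M).Reachable p q) :
    M.Reachable (th v u i p) (th v u i q) := by
  obtain ⟨w⟩ := h
  induction w with
  | nil => exact Reachable.refl _
  | cons h _ ih => exact h.2.2.2.2.2.reachable.trans ih

theorem reach_ends {W : Type*} {K : SimpleGraph W} {p q : W} (h : K.Reachable p q) :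
    p = q ∨ ((∃ r, K.Adj p r) ∧ ∃ r, K.Adj q r) := by
  obtain ⟨w⟩ := h
  induction w with
  | nil => exact Or.inl rfl
  | cons h _ ih =>
    right
    refine ⟨⟨_, h⟩, ?_⟩
    rcases ih with rfl | ih
    · exact ⟨_, h.symm⟩
    · exact ih.2

theorem Setup.oB_sys (S : Setup G v u) (R : Rd G v u i H) (hM : IsSys H M) :
    OutSys G v (oB G v u i M) := by
  refine ⟨?_, ?_, ?_⟩
  · rintro ⟨x, y⟩ ⟨x', y'⟩ ⟨h1, h2, h3, h4, h5, h6⟩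
    have h7 := hM.adj _ _ h6
    refine ⟨h1, h2, h3, h4, ?_, h5, ?_⟩
    · rintro rfl
      exact h7.2.2.1 (nbr_out h2)
    · rintro rfl
      exact h7.2.2.2.2 (nbr_out h1)
  · intro x y x' h1 h2 h3 h4 h5
    obtain ⟨z, hz⟩ := hM.ex (em v x) (nbr v u i x y) (em v x') (S.nbr_adj R h1 h3)
      ((R.ee h1 h2).2 (Or.inl h4))
      (fun e => h5 (S.nbr_inj h1 h3 h4 (by rw [e, nbr_out h2])))
    obtain ⟨y', hy', rfl⟩ := S.nbr_surj R h2 (hM.adj _ _ hz).2.2.2.1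
    exact ⟨y', h1, h2, h4, h3, hy', hz⟩
  · intro x y y' h
    rcases reach_ends h with e | ⟨⟨r, hr⟩, ⟨r', hr'⟩⟩
    · exact (Prod.mk.inj e).2
    · exact S.nbr_inj hr.1 hr.2.2.2.1 hr'.2.2.2.1 (hM.valid _ _ _ (oB_reach h))

noncomputable def T (v u : Fin 5 → V) (a : Fin 5 → Bool → V) (j : Fin 5) (s : Bool) :
    WT v × WT v := (em v (u j), em v (a j s))

structure Rz (v u : Fin 5 → V) (i : Fin 5) (M : SimpleGraph (WT v × WT v))
    (a : Fin 5 → Bool → V) (b0 b2 b3 b4 : Bool) : Prop where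
  e0 : ∀ s, M.Adj (T v u a i s) (T v u a (i + 1) (s ^^ b0))
  e2 : M.Adj (T v u a (i + 2) b2) (Sum.inr (), em v (u (i + 4)))
  f2 : M.Adj (T v u a (i + 2) (!b2)) (Sum.inr (), em v (u (i + 3)))
  e3 : M.Adj (T v u a (i + 3) b3) (Sum.inr (), em v (u (i + 2)))
  f3 : M.Adj (T v u a (i + 3) (!b3)) (Sum.inr (), em v (u (i + 4)))
  e4 : M.Adj (T v u a (i + 4) b4) (Sum.inr (), em v (u (i + 3)))
  f4 : M.Adj (T v u a (i + 4) (!b4)) (Sum.inr (), em v (u (i + 2)))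

variable {a : Fin 5 → Bool → V} {P : ℕ} {B : SimpleGraph (V × V)}

theorem Lab.aout (S : Setup G v u) (L : Lab G v u B a P) (j : Fin 5) (s : Bool) : out v (a j s) :=
  S.out_of ((L.nb _ _).2 (Or.inr ⟨s, rfl⟩)) (L.nv _ _)

theorem Lab.ainj (L : Lab G v u B a P) {j : Fin 5} {s t : Bool} (h : a j s = a j t) : s = t := by
  have := L.ne j
  cases s <;> cases t <;> simp_all

theorem Lab.T_reach (S : Setup G v u) (L : Lab G v u B a P) (hM : IsSys H M) {j : Fin 5}
    {s t : Bool} (h : M.Reachable (T v u a j s) (T v u a j t)) : s = t :=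
  L.ainj (em_inj (L.aout S _ _) (L.aout S _ _) (hM.valid _ _ _ h))

theorem Lab.T_adj (S : Setup G v u) (L : Lab G v u B a P) (R : Rd G v u i H) (j : Fin 5) (s : Bool) :
    H.Adj (em v (u j)) (em v (a j s)) :=
  (R.ee (S.out_u j) (L.aout S j s)).2 (Or.inl ((L.nb _ _).2 (Or.inr ⟨s, rfl⟩)))

theorem Lab.T_surj (S : Setup G v u) (L : Lab G v u B a P) (R : Rd G v u i H) {j : Fin 5}
    {z : WT v} (h : H.Adj (em v (u j)) z) (hz : z ≠ nbr v u i (u j) (v j)) :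
    ∃ s, z = em v (a j s) := by
  obtain ⟨y, hy, rfl⟩ := S.nbr_surj R (S.out_u j) h
  rcases (L.nb _ _).1 hy with rfl | ⟨s, rfl⟩
  · exact absurd rfl hz
  · exact ⟨s, nbr_out (L.aout S _ _)⟩

theorem Lab.T_ne (S : Setup G v u) (L : Lab G v u B a P) (j : Fin 5) (s : Bool) :
    em v (a j s) ≠ nbr v u i (u j) (v j) :=
  fun h => S.nbr_ne (L.aout S j s) ((L.nb _ _).2 (Or.inr ⟨s, rfl⟩)) h.symm

theorem Lab.w_bit (S : Setup G v u) (L : Lab G v u B a P) (R : Rd G v u i H) (hM : IsSys H M)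
    (j k l : Fin 5)
    (hp : ∀ m : Fin 5, m = i + 2 ∨ m = i + 3 ∨ m = i + 4 → m ≠ j → m = k ∨ m = l)
    (hj : j = i + 2 ∨ j = i + 3 ∨ j = i + 4) :
    ∃ b, M.Adj (T v u a j b) (Sum.inr (), em v (u k)) ∧
      M.Adj (T v u a j (!b)) (Sum.inr (), em v (u l)) := by
  have h : ∀ s, M.Adj (T v u a j s) (Sum.inr (), em v (u k)) ∨
      M.Adj (T v u a j s) (Sum.inr (), em v (u l)) := by
    intro s
    obtain ⟨z, hz⟩ := hM.ex (em v (u j)) (em v (a j s)) (Sum.inr ()) (L.T_adj S R j s)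
      ((R.er (S.out_u j)).2 (by rcases hj with h | h | h <;> simp [h])) (em_ne (L.aout S _ _))
    have h3 := hM.adj _ _ hz
    have h4 := h3.2.2.2.1
    have h5 := h3.2.2.2.2
    dsimp only at h4 h5
    rcases em_cases z with rfl | ⟨y, hy, rfl⟩
    · exact absurd h4 R.rr
    · have h6 : ∃ m, y = u m ∧ (m = i + 2 ∨ m = i + 3 ∨ m = i + 4) := by
        rcases (R.er hy).1 h4.symm with h | h | h <;> exact ⟨_, h, by simp⟩
      obtain ⟨m, rfl, hm⟩ := h6
      rcases hp m hm (fun e => h5 (by rw [e])) with rfl | rfl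
      · exact Or.inl hz
      · exact Or.inr hz
  have nk : ∀ {z}, M.Adj (T v u a j false) z → M.Adj (T v u a j true) z → False := by
    intro z h1 h2
    have := L.T_reach S hM (h1.reachable.trans h2.reachable.symm)
    simp at this
  rcases h false with h1 | h1 <;> rcases h true with h2 | h2
  · exact (nk h1 h2).elim
  · exact ⟨false, h1, h2⟩
  · exact ⟨true, h2, h1⟩
  · exact (nk h1 h2).elim

theorem Lab.exists_bits (S : Setup G v u) (L : Lab G v u B a P) (R : Rd G v u i H)
    (hM : IsSys H M) : ∃ b0 b2 b3 b4, Rz v u i M a b0 b2 b3 b4 := by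
  have h0 : ∀ s, ∃ s', M.Adj (T v u a i s) (T v u a (i + 1) s') := by
    intro s
    obtain ⟨z, hz⟩ := hM.ex (em v (u i)) (em v (a i s)) (em v (u (i + 1))) (L.T_adj S R i s)
      ((R.ee (S.out_u _) (S.out_u _)).2 (by simp)) (by rw [← nbr_i]; exact L.T_ne S i s)
    have h3 := hM.adj _ _ hz
    obtain ⟨s', rfl⟩ := L.T_surj S R h3.2.2.2.1 (by rw [S.nbr_i1]; exact h3.2.2.2.2)
    exact ⟨s', hz⟩
  obtain ⟨b0, h1⟩ := h0 false
  obtain ⟨b1, h2⟩ := h0 true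
  have hb : b1 = !b0 := by
    have : b1 ≠ b0 := by
      rintro rfl
      have := L.T_reach S hM (h1.reachable.trans h2.reachable.symm)
      simp at this
    revert this; cases b0 <;> cases b1 <;> simp
  obtain ⟨n1, n2, n3, n4, n5, n6, -⟩ := ne1 i
  obtain ⟨b2, e2, f2⟩ := L.w_bit S R hM (i + 2) (i + 4) (i + 3)
    (by clear * -; revert i; decide) (by simp)
  obtain ⟨b3, e3, f3⟩ := L.w_bit S R hM (i + 3) (i + 2) (i + 4)
    (by clear * -; revert i; decide) (by simp)
  obtain ⟨b4, e4, f4⟩ := L.w_bit S R hM (i + 4) (i + 3) (i + 2)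
    (by clear * -; revert i; decide) (by simp)
  refine ⟨b0, b2, b3, b4, ?_, e2, f2, e3, f3, e4, f4⟩
  intro s
  cases s
  · simpa using h1
  · simpa [hb] using h2

theorem Rz.facts {b0 b2 b3 b4 : Bool} (Z : Rz v u i M a b0 b2 b3 b4) (p : ℕ × ℕ)
    (hp : p ∈ facts i b0 b2 b3 b4) : ∃ j s k t, p = (cd j s, cd k t) ∧
      M.Reachable (T v u a j s) (T v u a k t) := by
  simp only [CiDC.facts, List.mem_cons, List.not_mem_nil, or_false] at hp
  rcases hp with rfl | rfl | rfl | rfl | rfl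
  · exact ⟨_, _, _, _, rfl, by simpa using (Z.e0 false).reachable⟩
  · exact ⟨_, _, _, _, rfl, by simpa using (Z.e0 true).reachable⟩
  · exact ⟨_, _, _, _, rfl, Z.e2.reachable.trans Z.f3.reachable.symm⟩
  · exact ⟨_, _, _, _, rfl, Z.e3.reachable.trans Z.f4.reachable.symm⟩
  · exact ⟨_, _, _, _, rfl, Z.e4.reachable.trans Z.f2.reachable.symm⟩

theorem Lab.th_tc (S : Setup G v u) (L : Lab G v u B a P) (j : Fin 5) (s : Bool) :
    th v u i (tc u a (cd j s)) = T v u a j s := by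
  rw [tc_cd]
  simp only [th, T, nbr_out (L.aout S j s)]

theorem Lab.jn_reach (S : Setup G v u) (L : Lab G v u (oB G v u i M) a P)
    {b0 b2 b3 b4 : Bool} (Z : Rz v u i M a b0 b2 b3 b4) :
    ∀ (k t t' : ℕ), t < 10 → jn P (ncode i b0 b2 b3 b4) k t t' = true →
      M.Reachable (th v u i (tc u a t)) (th v u i (tc u a t')) := by
  have hbh : ∀ t < 10, M.Reachable (th v u i (tc u a t))
      (th v u i (tc u a (bh (ncode i b0 b2 b3 b4) t))) := by
    intro t ht
    rcases (bh_facts i b0 b2 b3 b4 t ht).2 with h | h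
    · obtain ⟨j, s, k, s', e, h⟩ := Z.facts _ h
      rw [Prod.mk.injEq] at e
      rw [e.1, ← e.1, e.2, e.1, L.th_tc S, L.th_tc S]; exact h
    · obtain ⟨j, s, k, s', e, h⟩ := Z.facts _ h
      rw [Prod.mk.injEq] at e
      rw [e.1, e.2, L.th_tc S, L.th_tc S]; exact h.symm
  intro k
  induction k with
  | zero => intro t t' _ h; simp [jn] at h
  | succ k ih =>
    intro t t' ht h
    simp only [jn, Bool.or_eq_true, beq_iff_eq] at h
    have hd := oB_reach (L.re t ht)
    have hlt := dg_lt P L.mem t ht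
    rcases h with rfl | rfl | h
    · exact Reachable.refl _
    · exact hd
    · exact hd.trans ((hbh _ hlt).trans (ih _ _ (bh_facts i b0 b2 b3 b4 _ hlt).1 h))

theorem Lab.CF (S : Setup G v u) (L : Lab G v u (oB G v u i M) a P) (R : Rd G v u i H)
    (hM : IsSys H M) {b0 b2 b3 b4 : Bool} (Z : Rz v u i M a b0 b2 b3 b4) {t t' : ℕ} (ht : t < 10)
    (h : jn P (ncode i b0 b2 b3 b4) 5 t t' = true) {x y y' : V}
    (h1 : (oB G v u i M).Reachable (tc u a t) (x, y))
    (h2 : (oB G v u i M).Reachable (tc u a t') (x, y')) : y = y' := by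
  have hB := S.oB_sys R hM
  have m1 := hB.reach_mem h1 ⟨S.out_u _, (L.nb _ _).2 (Or.inr ⟨_, rfl⟩)⟩
  have m2 := hB.reach_mem h2 ⟨S.out_u _, (L.nb _ _).2 (Or.inr ⟨_, rfl⟩)⟩
  have h3 := L.jn_reach S Z 5 t t' ht h
  exact S.nbr_inj m1.1 m1.2 m2.2
    (hM.valid _ _ _ ((oB_reach h1).symm.trans (h3.trans (oB_reach h2))))

theorem Lab.validN (S : Setup G v u) (L : Lab G v u (oB G v u i M) a P)
    (hM : IsSys H M) {b0 b2 b3 b4 : Bool} (Z : Rz v u i M a b0 b2 b3 b4) :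
    ncode i b0 b2 b3 b4 < 80 ∧ validN P (ncode i b0 b2 b3 b4) = true := by
  have hcodes : ∀ (i : Fin 5) (b0 b2 b3 b4 : Bool), ncode i b0 b2 b3 b4 < 80 ∧
      2 * ((ncode i b0 b2 b3 b4 / 16 + 2) % 5) + ncode i b0 b2 b3 b4 / 2 % 2 = cd (i + 2) b2 ∧
      2 * ((ncode i b0 b2 b3 b4 / 16 + 3) % 5) + ncode i b0 b2 b3 b4 / 4 % 2 = cd (i + 3) b3 ∧
      2 * ((ncode i b0 b2 b3 b4 / 16 + 4) % 5) + ncode i b0 b2 b3 b4 / 8 % 2 = cd (i + 4) b4 := by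
    decide
  obtain ⟨c0, c1, c2, c3⟩ := hcodes i b0 b2 b3 b4
  refine ⟨c0, ?_⟩
  have hj := L.jn_reach S Z 5
  have h1 : ∀ j : Fin 5, jn P (ncode i b0 b2 b3 b4) 5 (cd j false) (cd j true) = false := by
    intro j
    by_contra h
    rw [Bool.not_eq_false] at h
    have := hj _ _ (cd_lt _ _) h
    rw [L.th_tc S, L.th_tc S] at this
    simpa using L.T_reach S hM this
  have h2 : ∀ j s k t m n, M.Adj (T v u a j s) (Sum.inr (), em v (u m)) →
      M.Adj (T v u a k t) (Sum.inr (), em v (u n)) → m ≠ n →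
      jn P (ncode i b0 b2 b3 b4) 5 (cd j s) (cd k t) = false := by
    intro j s k t m n e1 e2 hmn
    by_contra h
    rw [Bool.not_eq_false] at h
    have := hj _ _ (cd_lt _ _) h
    rw [L.th_tc S, L.th_tc S] at this
    exact S.une hmn (em_inj (S.out_u _) (S.out_u _)
      (hM.valid _ _ _ (e1.reachable.symm.trans (this.trans e2.reachable))))
  obtain ⟨-, -, -, -, -, -, n7, n8, n9⟩ := ne1 i
  have g1 := h2 _ _ _ _ _ _ Z.e2 Z.e3 n8.symm
  have g2 := h2 _ _ _ _ _ _ Z.e3 Z.e4 n7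
  have g3 := h2 _ _ _ _ _ _ Z.e4 Z.e2 n9
  have k0 := h1 0
  have k1 := h1 1
  have k2 := h1 2
  have k3 := h1 3
  have k4 := h1 4
  simp only [CiDC.validN, c1, c2, c3, g1, g2, g3]
  simp only [cd] at k0 k1 k2 k3 k4
  simp at k0 k1 k2 k3 k4
  simp [k0, k1, k2, k3, k4]
end

section
variable {V : Type*} {G : SimpleGraph V} {v u : Fin 5 → V}

theorem Lab.det_flag (S : Setup G v u) {i : Fin 5} {H : SimpleGraph (WT v)}
    {M M2 : SimpleGraph (WT v × WT v)} {a : Fin 5 → Bool → V} {P : ℕ}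
    (L : Lab G v u (oB G v u i M) a P) (R : Rd G v u i H) (hM : IsSys H M)
    (hB : oB G v u i M = oB G v u i M2) {b0 b2 b3 b4 : Bool}
    (Z : Rz v u i M a b0 b2 b3 b4) (Z2 : Rz v u i M2 a b0 b2 b3 b4) (p : WT v × WT v) (w : WT v)
    (h1 : H.Adj p.1 p.2) (h2 : H.Adj p.1 w) (h3 : p.2 ≠ w) :
    ∃ c, M.Adj p (w, c) ∧ M2.Adj p (w, c) := by
  obtain ⟨p1, p2⟩ := p
  dsimp only at h1 h2 h3
  obtain ⟨n1, n2, n3, n4, n5, n6, -⟩ := ne1 i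
  rcases em_cases p1 with rfl | ⟨x, hx, rfl⟩
  · rcases em_cases p2 with rfl | ⟨y, hy, rfl⟩
    · exact absurd h1 R.rr
    rcases em_cases w with rfl | ⟨z, hz, rfl⟩
    · exact absurd h2 R.rr
    rcases (R.er hy).1 h1.symm with rfl | rfl | rfl <;>
      rcases (R.er hz).1 h2.symm with rfl | rfl | rfl
    · exact absurd rfl h3
    · exact ⟨_, Z.e3.symm, Z2.e3.symm⟩
    · exact ⟨_, Z.f4.symm, Z2.f4.symm⟩
    · exact ⟨_, Z.f2.symm, Z2.f2.symm⟩
    · exact absurd rfl h3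
    · exact ⟨_, Z.e4.symm, Z2.e4.symm⟩
    · exact ⟨_, Z.e2.symm, Z2.e2.symm⟩
    · exact ⟨_, Z.f3.symm, Z2.f3.symm⟩
    · exact absurd rfl h3
  · rcases em_cases w with rfl | ⟨z, hz, rfl⟩
    · have hb : ∀ s b : Bool, s = b ∨ s = !b := by decide
      rcases (R.er hx).1 h2 with rfl | rfl | rfl
      · obtain ⟨s, rfl⟩ := L.T_surj S R h1 (by rw [S.nbr_w n1 n4]; exact h3)
        rcases hb s b2 with rfl | rfl
        · exact ⟨_, Z.e2, Z2.e2⟩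
        · exact ⟨_, Z.f2, Z2.f2⟩
      · obtain ⟨s, rfl⟩ := L.T_surj S R h1 (by rw [S.nbr_w n2 n5]; exact h3)
        rcases hb s b3 with rfl | rfl
        · exact ⟨_, Z.e3, Z2.e3⟩
        · exact ⟨_, Z.f3, Z2.f3⟩
      · obtain ⟨s, rfl⟩ := L.T_surj S R h1 (by rw [S.nbr_w n3 n6]; exact h3)
        rcases hb s b4 with rfl | rfl
        · exact ⟨_, Z.e4, Z2.e4⟩
        · exact ⟨_, Z.f4, Z2.f4⟩
    · rcases (R.ee hx hz).1 h2 with h | ⟨rfl, rfl⟩ | ⟨rfl, rfl⟩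
      · obtain ⟨y, hy, rfl⟩ := S.nbr_surj R hx h1
        have hyz : y ≠ z := by
          rintro rfl
          exact h3 (nbr_out hz)
        obtain ⟨y', hy'⟩ := (S.oB_sys R hM).ex x y z hx hz hy h hyz
        have hy2 := hy'
        rw [hB] at hy2
        exact ⟨_, hy'.2.2.2.2.2, hy2.2.2.2.2.2⟩
      · obtain ⟨s, rfl⟩ := L.T_surj S R h1 (by rw [nbr_i]; exact h3)
        exact ⟨_, Z.e0 s, Z2.e0 s⟩
      · obtain ⟨s, rfl⟩ := L.T_surj S R h1 (by rw [S.nbr_i1]; exact h3)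
        have e : ((s ^^ b0) ^^ b0) = s := by simp
        have g1 := (Z.e0 (s ^^ b0)).symm
        have g2 := (Z2.e0 (s ^^ b0)).symm
        rw [e] at g1 g2
        exact ⟨_, g1, g2⟩

theorem Lab.det (S : Setup G v u) {i : Fin 5} {H : SimpleGraph (WT v)}
    {M M2 : SimpleGraph (WT v × WT v)} {a : Fin 5 → Bool → V} {P : ℕ}
    (L : Lab G v u (oB G v u i M) a P) (R : Rd G v u i H) (hM : IsSys H M) (hM2 : IsSys H M2)
    (hB : oB G v u i M = oB G v u i M2) {b0 b2 b3 b4 : Bool}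
    (Z : Rz v u i M a b0 b2 b3 b4) (Z2 : Rz v u i M2 a b0 b2 b3 b4) : M = M2 := by
  ext p q
  obtain ⟨q1, q2⟩ := q
  constructor
  · intro h
    have h' := hM.adj _ _ h
    obtain ⟨c, g1, g2⟩ := L.det_flag S R hM hB Z Z2 p q1 h'.2.1 h'.1 h'.2.2.1
    rw [hM.uniq h g1]; exact g2
  · intro h
    have h' := hM2.adj _ _ h
    obtain ⟨c, g1, g2⟩ := L.det_flag S R hM hB Z Z2 p q1 h'.2.1 h'.1 h'.2.2.1
    rw [hM2.uniq h g2]; exact g1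

theorem ncode_inj {i i' : Fin 5} {b0 b2 b3 b4 b0' b2' b3' b4' : Bool}
    (h : ncode i b0 b2 b3 b4 = ncode i' b0' b2' b3' b4') :
    i = i' ∧ b0 = b0' ∧ b2 = b2' ∧ b3 = b3' ∧ b4 = b4' := by
  have hb : ∀ b : Bool, b.toNat ≤ 1 := by decide
  have hinj : ∀ b b' : Bool, b.toNat = b'.toNat → b = b' := by decide
  unfold ncode at h
  have := hb b0; have := hb b2; have := hb b3; have := hb b4
  have := hb b0'; have := hb b2'; have := hb b3'; have := hb b4'
  exact ⟨Fin.ext (by omega), hinj _ _ (by omega), hinj _ _ (by omega), hinj _ _ (by omega),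
    hinj _ _ (by omega)⟩

def AB (G : SimpleGraph V) (v u : Fin 5 → V) (G' : Fin 5 → SimpleGraph (WT v))
    (B : SimpleGraph (V × V)) (a : Fin 5 → Bool → V) (n : ℕ) : Prop :=
  ∃ (i : Fin 5) (M : SimpleGraph (WT v × WT v)) (b0 b2 b3 b4 : Bool), IsSys (G' i) M ∧
    oB G v u i M = B ∧ Rz v u i M a b0 b2 b3 b4 ∧ n = ncode i b0 b2 b3 b4

theorem Setup.key (S : Setup G v u) [Finite V] (G' : Fin 5 → SimpleGraph (WT v))
    (R : ∀ i, Rd G v u i (G' i)) {B : SimpleGraph (V × V)} (hB : OutSys G v B) :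
    ∃ (a : Fin 5 → Bool → V) (P : ℕ) (φ : ℕ → ℕ), Lab G v u B a P ∧
      (∀ n, AB G v u G' B a n → φ n < 2048 ∧ IsSys G (MG v u B a (φ n / 2))) ∧
      ∀ n n', AB G v u G' B a n → AB G v u G' B a n' → φ n = φ n' → n = n' := by
  obtain ⟨a, P, L⟩ := S.label hB
  obtain ⟨φ, h1, h2⟩ := fin_main L.mem (AB G v u G' B a) (by
    rintro n ⟨i, M, b0, b2, b3, b4, hM, rfl, Z, rfl⟩
    exact L.validN S hM Z)
  refine ⟨a, P, φ, L, ?_, h2⟩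
  intro n hn
  obtain ⟨h3, c, hc, h4⟩ := h1 n hn
  refine ⟨h3, MG_sys S hB L hc ?_⟩
  intro t ht t' ht' he x y y' r1 r2
  obtain ⟨n', ⟨i, M, b0, b2, b3, b4, hM, rfl, Z, rfl⟩, hj⟩ := h4 t ht t' ht' he
  exact L.CF S (R i) hM Z ht hj r1 r2

theorem Setup.inj (S : Setup G v u) [Finite V] (G' : Fin 5 → SimpleGraph (WT v))
    (R : ∀ i, Rd G v u i (G' i)) :
    ∃ F : (Σ i, {M // IsSys (G' i) M}) → {M // IsSys G M} × Bool, Function.Injective F := by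
  have hk := fun B : {B // OutSys G v B} => S.key G' R B.2
  choose a P φ hL h1 h2 using hk
  let Bx : (Σ i, {M // IsSys (G' i) M}) → {B // OutSys G v B} :=
    fun x => ⟨oB G v u x.1 x.2.1, S.oB_sys (R x.1) x.2.2⟩
  have hb := fun x : (Σ i, {M // IsSys (G' i) M}) => (hL (Bx x)).exists_bits S (R x.1) x.2.2
  choose b0 b2 b3 b4 hZ using hb
  let n := fun x : (Σ i, {M // IsSys (G' i) M}) => ncode x.1 (b0 x) (b2 x) (b3 x) (b4 x)
  have hA : ∀ x, AB G v u G' (Bx x).1 (a (Bx x)) (n x) :=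
    fun x => ⟨x.1, x.2.1, b0 x, b2 x, b3 x, b4 x, x.2.2, rfl, hZ x, rfl⟩
  refine ⟨fun x => (⟨MG v u (Bx x).1 (a (Bx x)) (φ (Bx x) (n x) / 2), (h1 _ _ (hA x)).2⟩,
    decide (φ (Bx x) (n x) % 2 = 1)), ?_⟩
  intro x y h
  rw [Prod.mk.injEq, Subtype.mk.injEq] at h
  obtain ⟨g1, g2⟩ := h
  have e : Bx x = Bx y := by
    apply Subtype.ext
    ext p q
    rw [MG_out (Bx x).2 (a := a (Bx x)) (g := φ (Bx x) (n x) / 2), g1, ← MG_out (Bx y).2]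
  have hAx := hA x
  have hx := h1 _ _ hAx
  have hy := h1 _ _ (hA y)
  have hZx := hZ x
  have hLx := hL (Bx y)
  rw [e] at g1 g2 hx hAx hZx
  have e2 := MG_inj S (by omega) (by omega) hx.2 g1
  have e3 : φ (Bx y) (n x) = φ (Bx y) (n y) := by
    have : (φ (Bx y) (n x) % 2 = 1) ↔ (φ (Bx y) (n y) % 2 = 1) := by simpa using g2
    omega
  have e4 := h2 _ _ _ hAx (hA y) e3
  obtain ⟨i1, i2, i3, i4, i5⟩ := ncode_inj e4
  have hZy := hZ y
  rw [← i2, ← i3, ← i4, ← i5] at hZy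
  have e5 : oB G v u x.1 x.2.1 = oB G v u y.1 y.2.1 := congrArg Subtype.val e
  replace hLx : Lab G v u (oB G v u y.1 y.2.1) (a (Bx y)) (P (Bx y)) := hLx
  generalize a (Bx y) = a' at hZx hZy hLx
  generalize P (Bx y) = P' at hLx
  generalize b0 x = c0 at hZx hZy
  generalize b2 x = c2 at hZx hZy
  generalize b3 x = c3 at hZx hZy
  generalize b4 x = c4 at hZx hZy
  clear * - hZx hZy hLx S i1 e5 R
  obtain ⟨i, M, hM⟩ := x
  obtain ⟨i', M', hM'⟩ := y
  dsimp only at i1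
  subst i1
  have := hLx.det S (R i) hM' hM e5.symm hZy hZx
  dsimp only at this
  subst this
  rfl

theorem Setup.sum_le (S : Setup G v u) [Finite V] (G' : Fin 5 → SimpleGraph (WT v))
    (R : ∀ i, Rd G v u i (G' i)) : ∑ i, nu (G' i) ≤ 2 * nu G := by
  obtain ⟨F, hF⟩ := S.inj G' R
  have h := Nat.card_le_card_of_injective F hF
  rw [Nat.card_sigma, Nat.card_prod, ← nu_eq S.cubic] at h
  simp only [← nu_eq (S.cubic' (R _))] at h
  simpa [mul_comm] using h
end

/-- Reducing a 5-cycle `v₀v₁v₂v₃v₄` (indices mod 5) in a cyclically 4-edge-connected cubic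
graph with no 3- or 4-cycles: for each `i`, the graph `G' i` is obtained by deleting the
cycle, adding a new vertex `w` adjacent to `u (i+2), u (i+3), u (i+4)` and adding the edge
`u i — u (i+1)`, where `u j` is the third neighbor of `v j`. Then
`ν(G) ≥ (5/2) · min_i ν(G' i)`. -/
theorem stmt12 {V : Type*} [Fintype V] (G : SimpleGraph V)
    (hcyc : CyclicallyFourEdgeConnected G) (hcubic : IsCubic G)
    (hC3 : ∀ a b c : V, ¬(G.Adj a b ∧ G.Adj b c ∧ G.Adj c a))
    (hC4 : ∀ a b c d : V, a ≠ c → b ≠ d →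
      ¬(G.Adj a b ∧ G.Adj b c ∧ G.Adj c d ∧ G.Adj d a))
    (v u : Fin 5 → V)
    (hvinj : Function.Injective v)
    (hcycle : ∀ i : Fin 5, G.Adj (v i) (v (i + 1)))
    (huadj : ∀ i : Fin 5, G.Adj (v i) (u i))
    (huinj : Function.Injective u)
    (huv : ∀ i j : Fin 5, u i ≠ v j)
    (G' : Fin 5 → SimpleGraph ({x : V // ∀ j : Fin 5, x ≠ v j} ⊕ Unit))
    (hG' : ∀ (i : Fin 5) p q, (G' i).Adj p q ↔
      (∃ x y, p = Sum.inl x ∧ q = Sum.inl y ∧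
        (G.Adj x.1 y.1 ∨ (x.1 = u i ∧ y.1 = u (i + 1)) ∨ (x.1 = u (i + 1) ∧ y.1 = u i))) ∨
      (∃ x, p = Sum.inl x ∧ q = Sum.inr () ∧
        (x.1 = u (i + 2) ∨ x.1 = u (i + 3) ∨ x.1 = u (i + 4))) ∨
      (∃ x, p = Sum.inr () ∧ q = Sum.inl x ∧
        (x.1 = u (i + 2) ∨ x.1 = u (i + 3) ∨ x.1 = u (i + 4)))) :
    (5 : ℚ) / 2 * ((⨅ i, nu (G' i) : ℕ) : ℚ) ≤ (nu G : ℚ) := by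
  have S : Setup G v u := ⟨hcubic, hC4, hvinj, hcycle, huadj, huinj, huv⟩
  have h := S.sum_le G' hG'
  have h1 : ∀ i, (⨅ i, nu (G' i)) ≤ nu (G' i) := fun i => ciInf_le (OrderBot.bddBelow _) i
  have h2 : 5 * (⨅ i, nu (G' i)) ≤ 2 * nu G := by
    refine le_trans ?_ h
    calc 5 * (⨅ i, nu (G' i)) = ∑ _i : Fin 5, (⨅ i, nu (G' i)) := by simp
      _ ≤ _ := Finset.sum_le_sum fun i _ => h1 i
  have h3 : (5 : ℚ) * ((⨅ i, nu (G' i) : ℕ) : ℚ) ≤ 2 * (nu G : ℚ) := by exact_mod_cast h2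
  linarith

end CiDC
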